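/- Let n ≥ 3 be an integer and let S_n be the symmetric group of degree n. Then 𝒥(S_n) ≤ 5/2, with equality if and only if n = 4; moreover 𝒥(S_n) < 2 for all n ≥ 7. -/

import Mathlib

/-!
Let `m` be the index of a subgroup `H ≤ S_n`. If `H` has an invariant set of size `k`, with
`1 ≤ k ≤ n/2`, then `m = C(n,k) i j` with `i` an index in `S_k` and `j` an index in `S_{n-k}`
(`index_of_not_transitive`). If `H` is transitive, then `m` is also an index in `S_{n-1}`, because
of point stabilizers; moreover, either `m ≤ 2`, or `H` is imprimitive and
`n! ∣ m · a!^b b!` for some factorization `n = ab` (`index_of_imprimitive`), or `H` is primitive with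
`6 ∣ m` and `m ≥ ⌈n/2⌉!` (`index_of_primitive`, from the theorems of Jordan and Bochert). All this is
collected in `idxSet_cases`.

For `n ≤ 13` these constraints, applied recursively, give lists containing all indices that are short
enough to prove the inequalities, once the index 24 in `S_6` and the indices 36, 60, 72 in `S_7` have
been excluded by Sylow arguments (`HSJ_small`, `HSJ_medium`). For `n = 4` the list
consists of the divisors of 24, and all of them are indices (`le_HSJ_four`).

For `n ≥ 14` strong induction shows `𝒥(S_n) < 2`. The indices 1 and 2 contribute `3/2`. The
intransitive subgroups contribute at most
`∑_{1 ≤ k ≤ n/2} 𝒥(S_k) 𝒥(S_{n-k}) / C(n,k) ≤ 1/4` (`intransitive_sum_le`). The remaining indices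
are large divisors of `n!`, and their contribution is less than `1/4` by a comparison with the series
over all `n`-smooth numbers. When `n ≤ 22`, they are at least some explicit `Y`, and the divisors of `n!`
below `Y` already make up all but `1/4` of the Euler product `∏_{p ≤ n} (1 - 1/p)⁻¹`
(`transIdx_sum_lt_of_le`). When `n ≥ 23`, they are at least `2^n/(2n)`, and the Rankin trick bounds their
contribution by `√(2n/2^n) ∏_{p ≤ n} (1 - p^{-1/2})⁻¹` (`transIdx_sum_lt_of_ge`).
-/

/-- `𝒥(G)`: the sum of the reciprocals of the indices of the subgroups of a finite
group `G`, each distinct index counted exactly once. -/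
noncomputable def HSJ (G : Type*) [Group G] [Finite G] : ℝ :=
  ∑ᶠ m ∈ Set.range (fun H : Subgroup G => H.index), (1 : ℝ) / (m : ℝ)

open Equiv MulAction
open scoped Nat Pointwise

/-! ### Indices of intransitive and transitive subgroups -/

/-- The set of indices of subgroups of `S_n`. -/
def idxSet (n : ℕ) : Set ℕ := Set.range (fun H : Subgroup (Perm (Fin n)) => H.index)

lemma index_mem_idxSet {α : Type*} [Finite α] (K : Subgroup (Perm α)) :
    K.index ∈ idxSet (Nat.card α) := by
  let e : Perm α ≃* Perm (Fin (Nat.card α)) := (Finite.equivFin α).permCongrHom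
  exact ⟨K.map (e : Perm α →* Perm (Fin (Nat.card α))), Subgroup.index_map_equiv K e⟩

lemma card_perm_eq (α : Type*) [Finite α] : Nat.card (Perm α) = (Nat.card α)! := by
  classical
  have := Fintype.ofFinite α
  rw [Nat.card_eq_fintype_card, Nat.card_eq_fintype_card, Fintype.card_perm]

/-- A group embedding into `Perm α` has order `|α|! / i` for some index `i` of a subgroup of
`S_{|α|}`. -/
lemma exists_idx_of_injective {α G : Type*} [Finite α] [Group G]
    (f : G →* Perm α) (hf : Function.Injective f) :
    ∃ i ∈ idxSet (Nat.card α), Nat.card G * i = (Nat.card α)! := by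
  refine ⟨_, index_mem_idxSet f.range, ?_⟩
  rw [Nat.card_congr (MonoidHom.ofInjective hf).toEquiv, Subgroup.card_mul_index, card_perm_eq]

lemma idxSet_dvd {n m : ℕ} (h : m ∈ idxSet n) : m ∣ n ! := by
  obtain ⟨H, rfl⟩ := h
  have := H.index_dvd_card
  rwa [card_perm_eq, Nat.card_fin] at this

lemma idxSet_pos {n m : ℕ} (h : m ∈ idxSet n) : 0 < m :=
  Nat.pos_of_dvd_of_pos (idxSet_dvd h) (Nat.factorial_pos n)

/-- The restriction of a group of permutations to an invariant set. -/
def restrictHom {α : Type*} (H : Subgroup (Perm α)) (s : Set α)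
    (hs : ∀ h ∈ H, ∀ x, h x ∈ s ↔ x ∈ s) : H →* Perm s where
  toFun h := (h : Perm α).subtypePerm (hs h h.2)
  map_one' := by ext; simp
  map_mul' a b := by ext; rfl

lemma restrictHom_apply {α : Type*} (H : Subgroup (Perm α)) (s : Set α)
    (hs : ∀ h ∈ H, ∀ x, h x ∈ s ↔ x ∈ s) (h : H) (x : s) :
    (restrictHom H s hs h x : α) = (h : Perm α) x := rfl

/-- A subgroup of `S_n` preserving a `k`-element set is, up to the choice of its image in
`S_k`, an extension of a subgroup of `S_k` by one of `S_{n-k}`; so its index is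
`C(n,k) * i * j` with `i`, `j` indices of subgroups of `S_k`, `S_{n-k}`. -/
lemma index_of_invariant {n : ℕ} (H : Subgroup (Perm (Fin n))) (s : Set (Fin n))
    (hs : ∀ h ∈ H, ∀ x, h x ∈ s ↔ x ∈ s) :
    ∃ i ∈ idxSet s.ncard, ∃ j ∈ idxSet (n - s.ncard), H.index = n.choose s.ncard * i * j := by
  classical
  have hs' : ∀ h ∈ H, ∀ x, h x ∈ sᶜ ↔ x ∈ sᶜ := fun h hh x => not_congr (hs h hh x)
  set f := restrictHom H s hs
  set g := restrictHom H sᶜ hs'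
  have hinj : Function.Injective (g.comp f.ker.subtype) := by
    rw [injective_iff_map_eq_one]
    rintro ⟨⟨h, hH⟩, hk⟩ hg
    ext x
    by_cases hx : x ∈ s
    · have := congrArg (fun p : Perm s => (p ⟨x, hx⟩ : Fin n)) (MonoidHom.mem_ker.1 hk)
      simpa [f, restrictHom_apply] using congrArg Fin.val this
    · have := congrArg (fun p : Perm (sᶜ : Set (Fin n)) => (p ⟨x, hx⟩ : Fin n)) hg
      simpa [g, restrictHom_apply] using congrArg Fin.val this
  obtain ⟨j, hj, hjc⟩ := exists_idx_of_injective _ hinj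
  have hcs : Nat.card s = s.ncard := rfl
  have hcc : Nat.card (sᶜ : Set (Fin n)) = n - s.ncard := by
    have := Set.ncard_compl s
    rw [Nat.card_eq_fintype_card, Fintype.card_fin] at this
    exact this
  have hle : s.ncard ≤ n := by simpa using Set.ncard_le_card s
  refine ⟨_, hcs ▸ index_mem_idxSet f.range, j, hcc ▸ hj, ?_⟩
  have h1 := f.range.card_mul_index
  have h2 := f.ker.card_mul_index
  have h3 := H.card_mul_index
  have h4 := Nat.choose_mul_factorial_mul_factorial hle
  rw [Subgroup.index_ker] at h2
  rw [card_perm_eq, hcs] at h1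
  rw [card_perm_eq, Nat.card_fin] at h3
  rw [hcc] at hjc
  rw [← h4, ← h2, ← h1, ← hjc] at h3
  have p1 : 0 < Nat.card f.ker := Nat.card_pos
  have p2 : 0 < Nat.card f.range := Nat.card_pos
  apply Nat.eq_of_mul_eq_mul_left (Nat.mul_pos p1 p2)
  rw [h3]; ring

/-- If `H` is intransitive, it preserves a set of size `1 ≤ k ≤ n/2`. -/
lemma index_of_not_transitive {n : ℕ} (hn : 0 < n) (H : Subgroup (Perm (Fin n)))
    (hH : ¬ IsPretransitive H (Fin n)) :
    ∃ k, 1 ≤ k ∧ k ≤ n / 2 ∧ ∃ i ∈ idxSet k, ∃ j ∈ idxSet (n - k),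
      H.index = n.choose k * i * j := by
  classical
  have : Nonempty (Fin n) := ⟨⟨0, hn⟩⟩
  obtain ⟨x₀⟩ := this
  set s := orbit H x₀ with hsdef
  have hs : ∀ h ∈ H, ∀ x, h x ∈ s ↔ x ∈ s := fun h hh x => by
    have hx : orbit H (h x) = orbit H x := orbit_eq_iff.2 (mem_orbit x (⟨h, hh⟩ : H))
    rw [hsdef, ← orbit_eq_iff, ← orbit_eq_iff, hx]
  have hne : s.Nonempty := ⟨x₀, mem_orbit_self x₀⟩
  have h1 : 1 ≤ s.ncard := (Set.ncard_pos).2 hne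
  have h2 : s.ncard < n := by
    by_contra hcon
    apply hH
    have hu : s = Set.univ := by
      apply Set.eq_of_subset_of_ncard_le (Set.subset_univ _)
      rw [Set.ncard_univ, Nat.card_fin]; omega
    refine (isPretransitive_iff_orbit_eq_univ (G := H) x₀).2 hu
  by_cases hk : s.ncard ≤ n / 2
  · obtain ⟨i, hi, j, hj, h⟩ := index_of_invariant H s hs
    exact ⟨_, h1, hk, i, hi, j, hj, h⟩
  · obtain ⟨i, hi, j, hj, h⟩ := index_of_invariant H s hs
    refine ⟨n - s.ncard, by omega, by omega, j, hj, i, ?_, ?_⟩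
    · rwa [Nat.sub_sub_self h2.le]
    · rw [h, Nat.choose_symm h2.le]; ring

/-- A point stabilizer of a transitive `H ≤ S_n` has in `S_{n-1}` the index that `H` has
in `S_n`. -/
lemma index_of_transitive {n : ℕ} (hn : 0 < n) (H : Subgroup (Perm (Fin n)))
    (hH : IsPretransitive H (Fin n)) : H.index ∈ idxSet (n - 1) := by
  classical
  let x₀ : Fin n := ⟨0, hn⟩
  set K := stabilizer H x₀
  have hK := index_stabilizer_of_transitive H x₀
  rw [Nat.card_fin] at hK
  have hKc := K.card_mul_index
  rw [hK] at hKc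
  have hs : ∀ h ∈ K.map H.subtype, ∀ x,
      h x ∈ ({x₀}ᶜ : Set (Fin n)) ↔ x ∈ ({x₀}ᶜ : Set (Fin n)) := by
    rintro _ ⟨h, hh, rfl⟩ x
    have hx : (h : Perm (Fin n)) x₀ = x₀ := mem_stabilizer_iff.1 hh
    simp only [Set.mem_compl_iff, Set.mem_singleton_iff, Subgroup.subtype_apply]
    rw [not_iff_not]
    constructor
    · intro h'; exact (h : Perm (Fin n)).injective (h'.trans hx.symm)
    · rintro rfl; exact hx
  have hinj : Function.Injective (restrictHom (K.map H.subtype) _ hs) := by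
    rw [injective_iff_map_eq_one]
    rintro ⟨h, hh⟩ h1
    ext x
    obtain ⟨h', hh', rfl⟩ := hh
    by_cases hx : x = x₀
    · subst hx
      exact congrArg Fin.val (mem_stabilizer_iff.1 hh' : (h' : Perm (Fin n)) x₀ = x₀)
    · have := congrArg (fun p : Perm ({x₀}ᶜ : Set (Fin n)) => (p ⟨x, hx⟩ : Fin n)) h1
      simpa [restrictHom_apply] using congrArg Fin.val this
  obtain ⟨j, hj, hjc⟩ := exists_idx_of_injective _ hinj
  have hcc : Nat.card ({x₀}ᶜ : Set (Fin n)) = n - 1 := by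
    have := Set.ncard_compl {x₀}
    rw [Nat.card_eq_fintype_card, Fintype.card_fin, Set.ncard_singleton] at this
    exact this
  rw [hcc] at hj hjc
  rw [Subgroup.card_map_of_injective H.subtype_injective] at hjc
  have h3 := H.card_mul_index
  rw [card_perm_eq, Nat.card_fin, ← hKc, ← Nat.mul_factorial_pred hn.ne', ← hjc] at h3
  have : H.index = j := by
    apply Nat.eq_of_mul_eq_mul_left (Nat.mul_pos (Nat.card_pos (α := K)) hn)
    rw [h3]; ring
  rwa [this]

/-! ### Imprimitive and primitive subgroups -/

/-- A transitive imprimitive `H ≤ S_n` with `b` blocks of size `a` has order dividing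
`(a!)^b * b!`. -/
lemma index_of_imprimitive {n : ℕ} (H : Subgroup (Perm (Fin n)))
    (hH : IsPretransitive H (Fin n)) (hH' : ¬ IsPreprimitive H (Fin n)) :
    ∃ a b, a * b = n ∧ 1 < a ∧ a < n ∧ n ! ∣ H.index * (a ! ^ b * b !) := by
  classical
  obtain ⟨B, hB, hBt⟩ : ∃ B : Set (Fin n), IsBlock H B ∧ ¬ IsTrivialBlock B := by
    by_contra! hcon
    exact hH' ⟨fun {B} hB => hcon B hB⟩
  rw [IsTrivialBlock, not_or, Set.not_subsingleton_iff] at hBt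
  have hBne : B.Nonempty := hBt.1.nonempty
  have hab := hB.ncard_block_mul_ncard_orbit_eq hBne
  rw [Nat.card_fin] at hab
  set Ω := orbit H B with hΩ
  have hfin : Finite Ω := inferInstance
  refine ⟨B.ncard, Ω.ncard, hab, ?_, ?_, ?_⟩
  · exact (Set.one_lt_ncard_iff_nontrivial).2 hBt.1
  · have : B ⊂ Set.univ := Set.ssubset_univ_iff.2 hBt.2
    have := Set.ncard_lt_ncard this
    rwa [Set.ncard_univ, Nat.card_fin] at this
  set f : H →* Perm Ω := toPermHom H Ω
  -- every block of the system is a translate of `B`, and the kernel of `f` preserves it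
  have hker : ∀ (ω : Ω), ∀ h ∈ f.ker.map H.subtype, ∀ x, h x ∈ (ω : Set (Fin n)) ↔
      x ∈ (ω : Set (Fin n)) := by
    rintro ω _ ⟨h, hh, rfl⟩ x
    have h1 : h • ω = ω := congrArg (fun p : Perm Ω => p ω) (MonoidHom.mem_ker.1 hh)
    have h2 : h • (ω : Set (Fin n)) = ω := congrArg Subtype.val h1
    have h3 := Set.smul_mem_smul_set_iff (a := h) (s := (ω : Set (Fin n))) (x := x)
    rw [h2] at h3
    exact h3
  set g : f.ker.map H.subtype →* ((ω : Ω) → Perm (ω : Set (Fin n))) :=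
    MonoidHom.pi (fun ω => restrictHom _ (ω : Set (Fin n)) (hker ω)) with hg
  have hcov : ∀ x : Fin n, ∃ ω : Ω, x ∈ (ω : Set (Fin n)) := by
    intro x
    obtain ⟨y, hy⟩ := hBne
    obtain ⟨h, rfl⟩ := exists_smul_eq H y x
    exact ⟨⟨h • B, mem_orbit B h⟩, Set.smul_mem_smul_set hy⟩
  have hinj : Function.Injective g := by
    rw [injective_iff_map_eq_one]
    intro h h1
    ext x
    obtain ⟨ω, hω⟩ := hcov x
    have := congrArg (fun p : Perm (ω : Set (Fin n)) => (p ⟨x, hω⟩ : Fin n)) (congrFun h1 ω)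
    simpa [hg, restrictHom_apply] using congrArg Fin.val this
  have hcard : Nat.card ((ω : Ω) → Perm (ω : Set (Fin n))) = B.ncard ! ^ Ω.ncard := by
    rw [Nat.card_pi]
    have : ∀ ω : Ω, Nat.card (Perm (ω : Set (Fin n))) = B.ncard ! := by
      rintro ⟨_, h, rfl⟩
      rw [card_perm_eq]
      congr 1
      exact Set.ncard_smul_set h B
    rw [Finset.prod_congr rfl (fun ω _ => this ω), Finset.prod_const, Finset.card_univ,
      ← Nat.card_eq_fintype_card]
    rfl
  have hd1 := Subgroup.card_dvd_of_injective g hinj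
  rw [hcard, Subgroup.card_map_of_injective H.subtype_injective] at hd1
  have hd2 := Subgroup.card_subgroup_dvd_card f.range
  have hΩc : Nat.card Ω = Ω.ncard := rfl
  rw [card_perm_eq, hΩc] at hd2
  have h2 := f.ker.card_mul_index
  rw [Subgroup.index_ker] at h2
  have h3 := H.card_mul_index
  rw [card_perm_eq, Nat.card_fin] at h3
  rw [← h3, ← h2, mul_comm]
  exact Nat.mul_dvd_mul_left _ (Nat.mul_dvd_mul hd1 hd2)

/-- If the prime `p` does not divide the index of `H`, then a conjugate of any given
`p`-element lies in `H`. -/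
lemma exists_conj_mem {G : Type*} [Group G] [Finite G] (H : Subgroup G) {p : ℕ} (hp : p.Prime)
    (hi : ¬ p ∣ H.index) (c : G) (hc : c ^ p = 1) : ∃ g : G, g⁻¹ * c * g ∈ H := by
  have := Fact.mk hp
  have hP : IsPGroup p (Subgroup.zpowers c) := by
    rw [IsPGroup.iff_card]
    rw [Nat.card_zpowers]
    obtain ⟨k, -, hk⟩ := (Nat.dvd_prime_pow hp).1 (by simpa using orderOf_dvd_of_pow_eq_one hc :
      orderOf c ∣ p ^ 1)
    exact ⟨k, hk⟩
  obtain ⟨q, hq⟩ := hP.nonempty_fixed_point_of_prime_not_dvd_card (G ⧸ H) hi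
  obtain ⟨g, rfl⟩ := QuotientGroup.mk_surjective q
  refine ⟨g, ?_⟩
  have h1 : ((c * g : G) : G ⧸ H) = (g : G ⧸ H) := hq ⟨c, Subgroup.mem_zpowers c⟩
  have h2 := QuotientGroup.eq.1 h1.symm
  rwa [mul_assoc]

/-- Two permutations whose supports meet in a single point have a 3-cycle as commutator. -/
lemma isThreeCycle_commutator {α : Type*} [Fintype α] [DecidableEq α] (x y : Perm α) (c : α)
    (hx : x c ≠ c) (hy : y c ≠ c) (h : ∀ z, x z ≠ z → y z ≠ z → z = c) :
    (x * y * x⁻¹ * y⁻¹).IsThreeCycle := by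
  have hyx : y (x c) = x c := by
    by_contra h'
    exact hx (h (x c) (fun h1 => hx (x.injective h1)) h')
  have hxy : x (y c) = y c := by
    by_contra h'
    exact hy (h (y c) h' (fun h1 => hy (y.injective h1)))
  have hne : x c ≠ y c := fun h' => hx (x.injective (h'.symm ▸ hxy : x (x c) = x c))
  have key : x * y * x⁻¹ * y⁻¹ = swap c (y c) * swap c (x c) := by
    rw [mul_inv_eq_iff_eq_mul, mul_inv_eq_iff_eq_mul]
    ext z
    simp only [Perm.mul_apply]
    have ix := x.injective
    have iy := y.injective
    by_cases hz : z = c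
    · subst hz
      rw [hxy, hyx, swap_apply_right, swap_apply_left]
    by_cases hxz : x z = z
    · rw [hxz]
      by_cases hyc : y z = c
      · rw [hyc, swap_apply_left, swap_apply_of_ne_of_ne hx hne]
      · have h1 : x (y z) = y z := by
          by_contra h'
          by_cases hyz : y z = z
          · exact h' (by rw [hyz, hxz])
          · exact hyc (h _ h' (fun h2 => hyz (iy h2)))
        have h2 : y z ≠ x c := fun h' => by
          have h3 : z = x c := iy (h'.trans hyx.symm)
          rw [h3] at hxz
          exact hx (ix hxz)
        have h3 : y z ≠ y c := fun h' => hz (iy h')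
        rw [h1, swap_apply_of_ne_of_ne hyc h2, swap_apply_of_ne_of_ne hyc h3]
    · have hyz : y z = z := by
        by_contra h'
        exact hz (h z hxz h')
      rw [hyz]
      by_cases hxc : x z = c
      · rw [hxc, swap_apply_of_ne_of_ne hy hne.symm, swap_apply_right]
      · have h1 : y (x z) = x z := by
          by_contra h'
          exact hxc (h _ (fun h2 => hxz (ix h2)) h')
        have h2 : x z ≠ x c := fun h' => hz (ix h')
        have h3 : x z ≠ y c := fun h' => by
          have h4 : z = y c := ix (h'.trans hxy.symm)
          exact hxz (by rw [h', h4])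
        rw [h1, swap_apply_of_ne_of_ne hxc h2, swap_apply_of_ne_of_ne hxc h3]
  rw [key]
  exact Perm.isThreeCycle_swap_mul_swap_same hy.symm hx.symm hne.symm

/-- **Bochert's theorem**: a subgroup of `S_n` without 3-cycles has index at least
`⌈n/2⌉!`. If `Δ` is a largest set such that only the identity of `H` is supported in `Δ`, then
`|Δ| ≥ n/2`, because otherwise two elements of `H` would have supports meeting in one point, and
their commutator would be a 3-cycle. The group `Sym(Δ)` meets `H` trivially, so that the cosets
of `H` by its elements are distinct. -/
lemma bochert {n : ℕ} (H : Subgroup (Perm (Fin n)))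
    (h3 : ∀ g ∈ H, ¬ g.IsThreeCycle) : ((n + 1) / 2)! ≤ H.index := by
  classical
  let 𝒟 : Finset (Finset (Fin n)) := Finset.univ.filter
    (fun D => ∀ h ∈ H, (∀ z, h z ≠ z → z ∈ D) → h = 1)
  have h𝒟 : 𝒟.Nonempty := ⟨∅, by
    simp only [𝒟, Finset.mem_filter, Finset.mem_univ, true_and]
    intro h _ hz
    ext z
    by_contra h'
    exact absurd (hz z (fun h2 => h' (congrArg Fin.val h2))) (Finset.notMem_empty z)⟩
  obtain ⟨D, hD, hmax⟩ := Finset.exists_max_image 𝒟 Finset.card h𝒟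
  simp only [𝒟, Finset.mem_filter, Finset.mem_univ, true_and] at hD hmax
  have hcard : (n + 1) / 2 ≤ D.card := by
    by_contra! hlt
    have hcompl : D.card < (Dᶜ).card := by
      rw [Finset.card_compl, Fintype.card_fin]; omega
    have h1 : ∃ x ∈ H, (∀ z, x z ≠ z → z ∈ Dᶜ) ∧ x ≠ 1 := by
      by_contra! hcon
      exact absurd (hmax Dᶜ hcon) (not_le.2 hcompl)
    obtain ⟨x, hxH, hxD, hx1⟩ := h1
    obtain ⟨c, hc⟩ : ∃ c, x c ≠ c := by
      by_contra! hcon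
      exact hx1 (Equiv.ext hcon)
    have hcD : c ∉ D := by simpa using hxD c hc
    have h2 : ∃ y ∈ H, (∀ z, y z ≠ z → z ∈ insert c D) ∧ y ≠ 1 := by
      by_contra! hcon
      have := hmax (insert c D) hcon
      rw [Finset.card_insert_of_notMem hcD] at this
      omega
    obtain ⟨y, hyH, hyD, hy1⟩ := h2
    have hyc : y c ≠ c := by
      intro hyc
      refine hy1 (hD y hyH (fun z hz => ?_))
      rcases Finset.mem_insert.1 (hyD z hz) with rfl | h'
      · exact absurd hyc hz
      · exact h'
    refine h3 _ ?_ (isThreeCycle_commutator x y c hc hyc (fun z hz hz' => ?_))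
    · exact H.mul_mem (H.mul_mem (H.mul_mem hxH hyH) (H.inv_mem hxH)) (H.inv_mem hyH)
    · rcases Finset.mem_insert.1 (hyD z hz') with h' | h'
      · exact h'
      · exact absurd h' (by simpa using hxD z hz)
  set S : Subgroup (Perm (Fin n)) := (Perm.ofSubtype (p := fun z => z ∈ D)).range
  have hS : Nat.card S = D.card ! := by
    rw [← Nat.card_congr (MonoidHom.ofInjective (Perm.ofSubtype_injective)).toEquiv, card_perm_eq]
    simp
  have hdisj : Disjoint H S := by
    rw [Subgroup.disjoint_def]
    rintro h hh ⟨p, rfl⟩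
    refine hD _ hh (fun z hz => ?_)
    by_contra hzD
    exact hz (Perm.ofSubtype_apply_of_not_mem p hzD)
  have hle := Nat.card_le_card_of_injective _ (Subgroup.mul_injective_of_disjoint hdisj)
  rw [Nat.card_prod, hS, ← H.card_mul_index] at hle
  exact (Nat.factorial_le hcard).trans (Nat.le_of_mul_le_mul_left hle Nat.card_pos)

/-- By Jordan's theorems a primitive subgroup of `S_n` other than `A_n` and `S_n` has neither
transpositions nor 3-cycles, so it contains no full Sylow 2- or 3-subgroup and satisfies the
hypothesis of Bochert's theorem. -/
lemma index_of_primitive {n : ℕ} (hn : 3 ≤ n) (H : Subgroup (Perm (Fin n)))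
    (hH : IsPreprimitive H (Fin n)) :
    H.index = 1 ∨ H.index = 2 ∨ (6 ∣ H.index ∧ ((n + 1) / 2)! ≤ H.index) := by
  classical
  have : Nontrivial (Fin n) := Fin.nontrivial_iff_two_le.2 (by omega)
  by_cases h3 : ∃ g ∈ H, g.IsThreeCycle
  · obtain ⟨g, hg, hg3⟩ := h3
    have hle := Perm.alternatingGroup_le_of_isPreprimitive_of_isThreeCycle_mem hH hg3 hg
    have hd := Subgroup.index_dvd_of_le hle
    rw [alternatingGroup.index_eq_two] at hd
    rcases (Nat.dvd_prime Nat.prime_two).1 hd with h | h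
    · exact Or.inl h
    · exact Or.inr (Or.inl h)
  push Not at h3
  by_cases h2 : ∃ g ∈ H, g.IsSwap
  · obtain ⟨g, hg, hg2⟩ := h2
    left
    rw [Perm.subgroup_eq_top_of_isPreprimitive_of_isSwap_mem hH g hg2 hg, Subgroup.index_top]
  push Not at h2
  refine Or.inr (Or.inr ⟨?_, bochert H h3⟩)
  let a : Fin n := ⟨0, by omega⟩
  let b : Fin n := ⟨1, by omega⟩
  let c : Fin n := ⟨2, by omega⟩
  have hab : a ≠ b := by simp [a, b]
  have hac : a ≠ c := by simp [a, c]
  have hbc : b ≠ c := by simp [b, c]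
  have d2 : 2 ∣ H.index := by
    by_contra hd
    obtain ⟨g, hg⟩ := exists_conj_mem H Nat.prime_two hd (swap a b) (by
      rw [pow_two, swap_mul_self])
    refine h2 _ hg ?_
    rw [show g⁻¹ * swap a b * g = g⁻¹ * swap a b * g⁻¹⁻¹ by rw [inv_inv], ← swap_apply_apply]
    exact ⟨_, _, fun h => hab (g⁻¹.injective h), rfl⟩
  have d3 : 3 ∣ H.index := by
    by_contra hd
    have ht := Perm.isThreeCycle_swap_mul_swap_same hab hac hbc
    obtain ⟨g, hg⟩ := exists_conj_mem H Nat.prime_three hd _ (by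
      rw [← ht.orderOf]; exact pow_orderOf_eq_one _)
    refine h3 _ hg ?_
    rw [show ∀ t, g⁻¹ * t * g = g⁻¹ * t * g⁻¹⁻¹ by simp]
    rw [Perm.IsThreeCycle, Perm.cycleType_conj]
    exact ht
  exact Nat.Coprime.mul_dvd_of_dvd_of_dvd (by norm_num) d2 d3

/-! ### Exclusions by Sylow theory in degrees 6 and 7 -/

/-- The arithmetic content of Sylow's theorem in `S_n` for a prime `p > n/2`: the normalizer of a
subgroup of order `p` has order dividing `p * (n - p)! * (p - 1)`, and its index in `H` is
congruent to 1 modulo `p`. -/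
lemma exists_sylow_factorization {n p : ℕ} (hp : p.Prime) (hn : n < 2 * p)
    (H : Subgroup (Perm (Fin n))) (h1 : p ∣ Nat.card H) (h2 : ¬ p ^ 2 ∣ Nat.card H) :
    ∃ r d, Nat.card H = r * d ∧ r % p = 1 ∧ d ∣ (n - p)! * p * (p - 1) := by
  classical
  have := Fact.mk hp
  obtain ⟨P⟩ : Nonempty (Sylow p H) := inferInstance
  have hPc : Nat.card P = p := by
    rw [P.card_eq_multiplicity]
    have h3 : (Nat.card H).factorization p = 1 := by
      apply le_antisymm
      · by_contra! h
        exact h2 ((hp.pow_dvd_iff_le_factorization Nat.card_pos.ne').2 h)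
      · exact (hp.dvd_iff_one_le_factorization Nat.card_pos.ne').1 h1
    rw [h3, pow_one]
  have hcyc : IsCyclic P := isCyclic_of_prime_card hPc
  have hr : (Subgroup.normalizer (P : Set H)).index % p = 1 := by
    rw [← P.card_eq_index_normalizer]
    have := card_sylow_modEq_one p H
    rwa [Nat.ModEq, Nat.mod_eq_of_lt hp.one_lt] at this
  refine ⟨_, _, ((Subgroup.normalizer (P : Set H)).index_mul_card).symm, hr, ?_⟩
  set f := (P : Subgroup H).normalizerMonoidHom
  obtain ⟨⟨g, hgP⟩, hg⟩ := hcyc.exists_generator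
  have hgo : orderOf (g : Perm (Fin n)) = p := by
    rw [Subgroup.orderOf_coe, ← hPc, ← orderOf_eq_card_of_forall_mem_zpowers hg,
      ← Subgroup.orderOf_coe (⟨g, hgP⟩ : P)]
  have hgc : (g : Perm (Fin n)).IsCycle := by
    apply Perm.isCycle_of_prime_order'
    · rw [hgo]; exact hp
    · rw [hgo]; simpa using hn
  have hct : (g : Perm (Fin n)).cycleType = {p} := by
    rw [hgc.cycleType, ← hgc.orderOf, hgo]
  have hcent := Perm.nat_card_centralizer (g : Perm (Fin n))
  rw [hct] at hcent
  simp only [Multiset.sum_singleton, Multiset.prod_singleton, Multiset.toFinset_singleton,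
    Finset.prod_singleton, Multiset.count_singleton_self, Nat.factorial_one, mul_one,
    Fintype.card_fin] at hcent
  have hk := f.ker.index_mul_card
  rw [Subgroup.index_ker] at hk
  have hk' : Nat.card (Subgroup.normalizer (P : Set H)) = _ := hk.symm
  rw [hk', mul_comm]
  apply Nat.mul_dvd_mul
  · rw [← hcent]
    let φ' : f.ker →* Subgroup.centralizer {(g : Perm (Fin n))} :=
      ((H.subtype.comp (Subgroup.subtype _)).comp (Subgroup.subtype _)).codRestrict _ (by
        rintro ⟨k, hk⟩
        rw [Subgroup.mem_centralizer_singleton_iff]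
        have hk' := hk
        rw [Subgroup.normalizerMonoidHom_ker, Subgroup.mem_subgroupOf,
          Subgroup.mem_centralizer_iff] at hk'
        have := hk' g hgP
        exact (congrArg Subtype.val this).symm)
    refine Subgroup.card_dvd_of_injective φ' ?_
    intro a b hab
    have := congrArg Subtype.val hab
    exact Subtype.ext (Subtype.ext (Subtype.ext this))
  · have h5 := Subgroup.card_subgroup_dvd_card f.range
    rwa [hcyc.card_mulAut, hPc, Nat.totient_prime hp] at h5

/-- No divisor `d` of the bound on the order of a Sylow normalizer leaves an admissible number
`n!/(md)` of Sylow `p`-subgroups. -/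
lemma notMem_idxSet_of_sylow {n p m : ℕ} (hp : p.Prime) (hn : n < 2 * p)
    (h1 : p ∣ n ! / m) (h2 : ¬ p ^ 2 ∣ n ! / m)
    (h : ∀ d ∈ ((n - p)! * p * (p - 1)).divisors, d ∣ n ! / m → n ! / m / d % p ≠ 1) :
    m ∉ idxSet n := by
  rintro ⟨H, rfl⟩
  have hc : Nat.card H = n ! / H.index := by
    have := H.card_mul_index
    rw [card_perm_eq, Nat.card_fin] at this
    rw [← this, Nat.mul_div_cancel _ (Nat.pos_of_ne_zero H.index_ne_zero_of_finite)]
  simp only [← hc] at h1 h2 h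
  obtain ⟨r, d, hrd, hr, hd⟩ := exists_sylow_factorization hp hn H h1 h2
  have hne : (n - p)! * p * (p - 1) ≠ 0 := by
    have := hp.two_le
    have := Nat.factorial_pos (n - p)
    refine (Nat.mul_pos (Nat.mul_pos this ?_) ?_).ne' <;> omega
  refine h d (Nat.mem_divisors.2 ⟨hd, hne⟩) ⟨r, by rw [hrd, mul_comm]⟩ ?_
  rw [hrd, Nat.mul_div_cancel _ (Nat.pos_of_dvd_of_pos hd (Nat.pos_of_ne_zero hne)), hr]

lemma notMem_idxSet_seven : 36 ∉ idxSet 7 ∧ 60 ∉ idxSet 7 ∧ 72 ∉ idxSet 7 := by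
  refine ⟨?_, ?_, ?_⟩ <;>
  exact notMem_idxSet_of_sylow (p := 7) (by norm_num) (by norm_num) (by decide +kernel)
    (by decide +kernel) (by decide +kernel)

/-- A subgroup of `S_6` of order 30 would have a normal 2-complement, of order 15, and `S_6` has
no subgroup of order 15. -/
lemma notMem_idxSet_six : 24 ∉ idxSet 6 := by
  have h48 : 48 ∉ idxSet 6 :=
    notMem_idxSet_of_sylow (p := 5) (by norm_num) (by norm_num) (by decide +kernel)
      (by decide +kernel) (by decide +kernel)
  rintro ⟨H, hH⟩
  simp only at hH
  have hc : Nat.card H = 30 := by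
    have := H.card_mul_index
    rw [card_perm_eq, Nat.card_fin, hH, show 6 ! = 720 from rfl] at this
    omega
  obtain ⟨P⟩ : Nonempty (Sylow 2 H) := inferInstance
  have hPc : Nat.card P = 2 := by
    rw [P.card_eq_multiplicity, hc]
    rw [show (30 : ℕ) = 2 * 15 from rfl, Nat.factorization_mul (by norm_num) (by norm_num),
      Finsupp.add_apply, Nat.Prime.factorization_self Nat.prime_two,
      Nat.factorization_eq_zero_of_not_dvd (by norm_num)]
    rfl
  have hcyc : IsCyclic P := isCyclic_of_prime_card hPc
  have hK := IsCyclic.isComplement' (p := 2) (by rw [hc]; norm_num) hcyc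
  set K := (MonoidHom.transferSylow P (hcyc.normalizer_le_centralizer
    (by rw [hc]; norm_num))).ker
  have hKc := hK.card_mul_card
  have hPc' : Nat.card (P : Subgroup H) = 2 := hPc
  rw [hPc', hc] at hKc
  refine h48 ⟨K.map H.subtype, ?_⟩
  have h1 := (K.map H.subtype).card_mul_index
  rw [Subgroup.card_map_of_injective H.subtype_injective, card_perm_eq, Nat.card_fin,
    show Nat.card K = 15 by omega, show 6 ! = 720 from rfl] at h1
  simp only
  omega

/-! ### Lists of possible indices in small degree -/

/-- The constraint on the index `m` of a transitive subgroup of `S_n` not containing `A_n`: the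
primitive case, or the imprimitive case with `n / a` blocks of size `a`. -/
def transTest (n m : ℕ) : Bool :=
  (m % 6 == 0 && ((n + 1) / 2)!.ble m) ||
    (List.range n).any fun a =>
      Nat.ble 2 a && n % a == 0 && m * (a ! ^ (n / a) * (n / a)!) % n ! == 0

lemma transTest_of_primitive {n m : ℕ} (h : 6 ∣ m) (h' : ((n + 1) / 2)! ≤ m) :
    transTest n m = true := by
  simp [transTest, Nat.mod_eq_zero_of_dvd h, h']

lemma transTest_of_imprimitive {n m a b : ℕ} (hab : a * b = n) (h1 : 1 < a) (h2 : a < n)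
    (h : n ! ∣ m * (a ! ^ b * b !)) : transTest n m = true := by
  have hb : n / a = b := by rw [← hab, Nat.mul_div_cancel_left _ (by omega)]
  have hm : n % a = 0 := by rw [← hab, Nat.mul_mod_right]
  rw [transTest, Bool.or_eq_true]
  right
  rw [List.any_eq_true]
  have h1' : 2 ≤ a := h1
  exact ⟨a, List.mem_range.2 h2, by simp [hb, hm, Nat.mod_eq_zero_of_dvd h, h1']⟩

/-- The three possibilities for a subgroup of `S_n`: it contains `A_n`, it is intransitive, or it
is transitive without containing `A_n`. -/
lemma idxSet_cases {n m : ℕ} (hn : 3 ≤ n) (hm : m ∈ idxSet n) :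
    (m = 1 ∨ m = 2) ∨
    (∃ k, 1 ≤ k ∧ k ≤ n / 2 ∧ ∃ i ∈ idxSet k, ∃ j ∈ idxSet (n - k), m = n.choose k * i * j) ∨
    (m ∈ idxSet (n - 1) ∧ ((6 ∣ m ∧ ((n + 1) / 2)! ≤ m) ∨
      ∃ a b, a * b = n ∧ 1 < a ∧ a < n ∧ n ! ∣ m * (a ! ^ b * b !))) := by
  obtain ⟨H, rfl⟩ := hm
  simp only
  by_cases hH : IsPretransitive H (Fin n)
  · have h1 := index_of_transitive (by omega) H hH
    by_cases hH' : IsPreprimitive H (Fin n)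
    · rcases index_of_primitive hn H hH' with h | h | h
      · exact Or.inl (Or.inl h)
      · exact Or.inl (Or.inr h)
      · exact Or.inr (Or.inr ⟨h1, Or.inl h⟩)
    · exact Or.inr (Or.inr ⟨h1, Or.inr (index_of_imprimitive H hH hH')⟩)
  · exact Or.inr (Or.inl (index_of_not_transitive (by omega) H hH))

/-- The candidates for indices in `S_n` obtained from a table `T` for the smaller degrees,
without `x` for each pair `(n, x)` in a list of known exclusions. -/
def nextList (T : ℕ → List ℕ) (n : ℕ) : List ℕ :=
  1 :: 2 :: ((List.range (n / 2)).flatMap (fun k =>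
    (T (k + 1)).flatMap fun i => (T (n - (k + 1))).map fun j => n.choose (k + 1) * i * j) ++
  (T (n - 1)).filter fun m => transTest n m &&
    !([(6, 24), (7, 36), (7, 60), (7, 72)].any fun q => q.1 == n && q.2 == m))

lemma mem_nextList {T : ℕ → List ℕ} {n : ℕ} (hn : 3 ≤ n)
    (hT : ∀ k < n, ∀ m ∈ idxSet k, m ∈ T k) {m : ℕ} (hm : m ∈ idxSet n) : m ∈ nextList T n := by
  rw [nextList, List.mem_cons, List.mem_cons, List.mem_append]
  rcases idxSet_cases hn hm with (h | h) | ⟨k, hk1, hk2, i, hi, j, hj, h⟩ | ⟨h1, h2⟩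
  · exact Or.inl h
  · exact Or.inr (Or.inl h)
  · refine Or.inr (Or.inr (Or.inl ?_))
    obtain ⟨k, rfl⟩ : ∃ k', k = k' + 1 := ⟨k - 1, by omega⟩
    rw [List.mem_flatMap]
    refine ⟨k, List.mem_range.2 (by omega), ?_⟩
    rw [List.mem_flatMap]
    refine ⟨i, hT _ (by omega) _ hi, ?_⟩
    rw [List.mem_map]
    exact ⟨j, hT _ (by omega) _ hj, h.symm⟩
  · refine Or.inr (Or.inr (Or.inr ?_))
    rw [List.mem_filter]
    refine ⟨hT _ (by omega) _ h1, ?_⟩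
    have ht : transTest n m = true := by
      rcases h2 with ⟨h2, h3⟩ | ⟨a, b, h2, h3, h4, h5⟩
      · exact transTest_of_primitive h2 h3
      · exact transTest_of_imprimitive h2 h3 h4 h5
    rw [ht, Bool.true_and, Bool.not_eq_true', ← Bool.not_eq_true]
    intro hany
    obtain ⟨⟨a, b⟩, hq, hq'⟩ := List.any_eq_true.1 hany
    rw [Bool.and_eq_true, beq_iff_eq, beq_iff_eq] at hq'
    obtain ⟨h6, h7⟩ := hq'
    dsimp only at h6 h7
    subst h6 h7
    simp only [List.mem_cons, List.not_mem_nil, or_false, Prod.mk.injEq] at hq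
    rcases hq with ⟨rfl, rfl⟩ | ⟨rfl, rfl⟩ | ⟨rfl, rfl⟩ | ⟨rfl, rfl⟩
    · exact notMem_idxSet_six hm
    · exact notMem_idxSet_seven.1 hm
    · exact notMem_idxSet_seven.2.1 hm
    · exact notMem_idxSet_seven.2.2 hm

/-- A list containing all indices of subgroups of `S_n`, for `n ≤ 11`. It arises by closing the
lists of smaller degree under the three alternatives of `idxSet_cases` (and the exclusions in
degrees 6 and 7), which is what `mem_idxTable` verifies. -/
def idxTable : ℕ → List ℕ
  | 0 => [1]
  | 1 => [1]
  | 2 => [1, 2]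
  | 3 => [1, 2, 3, 6]
  | 4 => [1, 2, 3, 4, 6, 8, 12, 24]
  | 5 => [1, 2, 5, 6, 10, 12, 15, 20, 24, 30, 40, 60, 120]
  | 6 => [1, 2, 6, 10, 12, 15, 20, 30, 36, 40, 45, 60, 72, 80, 90, 120, 144, 180, 240, 360, 720]
  | 7 => [1, 2, 7, 14, 21, 30, 35, 42, 70, 84, 90, 105, 120, 126, 140, 144, 180, 210, 240, 252,
      280, 315, 360, 420, 504, 560, 630, 720, 840, 1008, 1260, 1680, 2520, 5040]
  | 8 => [1, 2, 8, 16, 28, 30, 35, 42, 56, 70, 84, 90, 105, 112, 120, 126, 140, 144, 168, 180,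
      210, 224, 240, 252, 280, 315, 336, 360, 420, 504, 560, 630, 672, 720, 840, 960, 1008, 1120,
      1152, 1260, 1344, 1440, 1680, 1920, 2016, 2240, 2520, 2688, 2880, 3360, 4032, 4480, 5040,
      5760, 6720, 8064, 10080, 13440, 20160, 40320]
  | 9 => [1, 2, 9, 18, 36, 72, 84, 120, 126, 144, 168, 180, 210, 240, 252, 270, 280, 315, 336,
      360, 378, 420, 504, 560, 630, 672, 720, 756, 810, 840, 945, 960, 1008, 1080, 1120, 1134,
      1152, 1260, 1296, 1344, 1440, 1512, 1620, 1680, 1890, 1920, 2016, 2160, 2240, 2268, 2520,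
      2688, 2835, 2880, 3024, 3240, 3360, 3780, 4032, 4320, 4480, 4536, 5040, 5184, 5670, 5760,
      6048, 6480, 6720, 7560, 8064, 8640, 9072, 10080, 10368, 11340, 12096, 12960, 13440, 15120,
      17280, 18144, 20160, 22680, 24192, 25920, 30240, 36288, 40320, 45360, 51840, 60480, 72576,
      90720, 120960, 181440, 362880]
  | 10 => [1, 2, 10, 20, 45, 90, 120, 126, 144, 168, 180, 210, 240, 252, 270, 336, 360, 378, 420,
      480, 504, 630, 672, 720, 756, 810, 840, 945, 960, 1008, 1080, 1134, 1152, 1200, 1260, 1296,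
      1344, 1350, 1440, 1512, 1575, 1620, 1680, 1800, 1890, 1920, 2016, 2100, 2160, 2268, 2400,
      2520, 2688, 2700, 2800, 2835, 2880, 3024, 3150, 3240, 3360, 3600, 3780, 4032, 4050, 4200,
      4320, 4536, 4725, 5040, 5184, 5400, 5600, 5670, 5760, 6048, 6300, 6480, 6720, 7200, 7560,
      8064, 8100, 8400, 8640, 9072, 9450, 9600, 10080, 10368, 10800, 11200, 11340, 11520, 12096,
      12600, 12960, 13440, 14175, 14400, 15120, 16200, 16800, 17280, 18144, 18900, 19200, 20160,
      21600, 22400, 22680, 24192, 25200, 25920, 26880, 28350, 28800, 30240, 32400, 33600, 34560,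
      36288, 37800, 40320, 43200, 44800, 45360, 50400, 51840, 56700, 57600, 60480, 64800, 67200,
      72576, 75600, 80640, 86400, 90720, 100800, 103680, 113400, 120960, 129600, 134400, 145152,
      151200, 172800, 181440, 201600, 226800, 241920, 259200, 302400, 362880, 403200, 453600,
      518400, 604800, 725760, 907200, 1209600, 1814400, 3628800]
  | 11 => [1, 2, 11, 22, 55, 110, 165, 220, 330, 462, 495, 660, 720, 756, 810, 840, 924, 960,
      990, 1008, 1080, 1134, 1152, 1200, 1260, 1296, 1320, 1344, 1350, 1386, 1440, 1512, 1584,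
      1620, 1680, 1800, 1848, 1890, 1920, 1980, 2016, 2100, 2160, 2268, 2310, 2400, 2520, 2640,
      2688, 2700, 2772, 2880, 2970, 3024, 3150, 3240, 3360, 3600, 3696, 3780, 3960, 4032, 4050,
      4158, 4200, 4320, 4536, 4620, 4950, 5040, 5184, 5280, 5400, 5544, 5670, 5760, 5775, 6048,
      6300, 6480, 6600, 6720, 6930, 7200, 7392, 7560, 7920, 8064, 8100, 8316, 8400, 8640, 8910,
      9072, 9240, 9450, 9600, 9900, 10080, 10368, 10395, 10560, 10800, 11088, 11340, 11520,
      11550, 11880, 12096, 12474, 12600, 12672, 12960, 13200, 13440, 13860, 14256, 14400, 14784,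
      14850, 15120, 15400, 15840, 16200, 16632, 16800, 17280, 17325, 17820, 18144, 18480, 18900,
      19200, 19800, 20160, 20790, 21120, 21600, 22176, 22680, 23100, 23760, 24192, 24948, 25200,
      25920, 26400, 26880, 27720, 28350, 28800, 29568, 29700, 30240, 30800, 31185, 31680, 32400,
      33264, 33600, 34560, 34650, 35640, 36288, 36960, 37800, 39600, 40320, 41580, 43200, 44352,
      44550, 45360, 46200, 47520, 49896, 50400, 51840, 51975, 52800, 55440, 56700, 57024, 57600,
      59400, 60480, 61600, 62370, 63360, 64800, 66528, 67200, 69300, 71280, 72576, 73920, 75600,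
      79200, 80640, 83160, 86400, 88704, 89100, 90720, 92400, 95040, 99792, 100800, 103680,
      103950, 105600, 110880, 113400, 114048, 118800, 120960, 123200, 124740, 126720, 129600,
      133056, 134400, 138600, 142560, 145152, 147840, 151200, 155925, 158400, 166320, 172800,
      178200, 181440, 184800, 190080, 199584, 201600, 207900, 211200, 221760, 226800, 237600,
      241920, 246400, 249480, 259200, 266112, 277200, 285120, 295680, 302400, 311850, 316800,
      332640, 356400, 362880, 369600, 380160, 399168, 403200, 415800, 443520, 453600, 475200,
      492800, 498960, 518400, 554400, 570240, 604800, 623700, 633600, 665280, 712800, 725760,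
      739200, 798336, 831600, 887040, 907200, 950400, 997920, 1108800, 1140480, 1209600, 1247400,
      1330560, 1425600, 1478400, 1596672, 1663200, 1814400, 1900800, 1995840, 2217600, 2494800,
      2661120, 2851200, 3326400, 3628800, 3991680, 4435200, 4989600, 5702400, 6652800, 7983360,
      9979200, 13305600, 19958400, 39916800]
  | _ => []

/-- The membership test `m ∈ l`, written with recursors for fast evaluation in the kernel. -/
noncomputable def memTest (m : ℕ) (l : List ℕ) : Bool :=
  List.rec false (fun a _ r => Bool.rec r true (Nat.beq m a)) l

lemma mem_of_memTest {m : ℕ} {l : List ℕ} (h : memTest m l = true) : m ∈ l := by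
  induction l with
  | nil => exact absurd h Bool.false_ne_true
  | cons a l ih =>
    rw [List.mem_cons]
    cases hb : Nat.beq m a with
    | true => exact Or.inl (Nat.eq_of_beq_eq_true hb)
    | false =>
      refine Or.inr (ih ?_)
      have h' : (Bool.rec (memTest m l) true (Nat.beq m a) : Bool) = true := h
      rwa [hb] at h'

lemma idxTable_closed : ∀ n < 12, 3 ≤ n →
    ((nextList idxTable n).all fun m => memTest m (idxTable n)) = true := by
  decide +kernel

lemma mem_idxTable : ∀ n < 12, ∀ m ∈ idxSet n, m ∈ idxTable n := by
  intro n
  induction n using Nat.strong_induction_on with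
  | _ n ih =>
    intro hn m hm
    by_cases h3 : 3 ≤ n
    · have := mem_nextList h3 (fun k hk => ih k hk (by omega)) hm
      exact mem_of_memTest (List.all_eq_true.1 (idxTable_closed n hn h3) m this)
    · have hd := idxSet_dvd hm
      have hp := idxSet_pos hm
      interval_cases n
      · have : m = 1 := by simpa using hd
        simp [this, idxTable]
      · have : m = 1 := by simpa using hd
        simp [this, idxTable]
      · rcases (Nat.dvd_prime Nat.prime_two).1 hd with h | h <;> simp [h, idxTable]

lemma idxSet_finite (n : ℕ) : (idxSet n).Finite :=
  (n !).divisors.finite_toSet.subset fun _ hm =>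
    Finset.mem_coe.2 (Nat.mem_divisors.2 ⟨idxSet_dvd hm, (Nat.factorial_pos n).ne'⟩)

/-- The set of indices of subgroups of `S_n` as a `Finset`. -/
noncomputable def idx (n : ℕ) : Finset ℕ := (idxSet_finite n).toFinset

lemma mem_idx {n m : ℕ} : m ∈ idx n ↔ m ∈ idxSet n := Set.Finite.mem_toFinset _

lemma HSJ_eq_sum (n : ℕ) : HSJ (Perm (Fin n)) = ∑ m ∈ idx n, (1 : ℝ) / m :=
  finsum_mem_eq_finite_toFinset_sum _ (idxSet_finite n)

lemma HSJ_nonneg (n : ℕ) : 0 ≤ HSJ (Perm (Fin n)) := by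
  rw [HSJ_eq_sum]
  exact Finset.sum_nonneg fun _ _ => by positivity

/-- `∑ 1/m` over the list, in units of `1/K` and with every term rounded up. -/
def ceilSum (K : ℕ) (l : List ℕ) : ℕ := l.foldr (fun m s => (K + m - 1) / m + s) 0

lemma sum_le_ceilSum {K : ℕ} (hK : 0 < K) (l : List ℕ) :
    ∑ m ∈ l.toFinset, (1 : ℝ) / m ≤ ceilSum K l / K := by
  induction l with
  | nil => simp [ceilSum]
  | cons a l ih =>
    have h1 : ∑ m ∈ (a :: l).toFinset, (1 : ℝ) / m ≤ 1 / a + ∑ m ∈ l.toFinset, (1 : ℝ) / m := by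
      rw [List.toFinset_cons]
      by_cases h : a ∈ l.toFinset
      · rw [Finset.insert_eq_of_mem h]
        have : (0 : ℝ) ≤ 1 / a := by positivity
        linarith
      · rw [Finset.sum_insert h]
    have h2 : (1 : ℝ) / a ≤ (((K + a - 1) / a : ℕ) : ℝ) / K := by
      rcases Nat.eq_zero_or_pos a with rfl | ha
      · simp
      · rw [div_le_div_iff₀ (by exact_mod_cast ha) (by exact_mod_cast hK)]
        have h3 := Nat.div_add_mod (K + a - 1) a
        have h4 := Nat.mod_lt (K + a - 1) ha
        have h5 : K ≤ (K + a - 1) / a * a := by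
          rw [mul_comm]; omega
        rw [one_mul]
        exact_mod_cast h5
    have h3 : ceilSum K (a :: l) = (K + a - 1) / a + ceilSum K l := rfl
    rw [h3, Nat.cast_add, add_div]
    linarith

lemma HSJ_le_ceilSum {n K : ℕ} (hK : 0 < K) {l : List ℕ} (hl : ∀ m ∈ idxSet n, m ∈ l) :
    HSJ (Perm (Fin n)) ≤ ceilSum K l / K := by
  rw [HSJ_eq_sum]
  refine le_trans (Finset.sum_le_sum_of_subset_of_nonneg (fun m hm => ?_) fun _ _ _ => ?_)
    (sum_le_ceilSum hK l)
  · exact List.mem_toFinset.2 (hl m (mem_idx.1 hm))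
  · positivity

lemma HSJ_le_of_ceilSum {n a b : ℕ} {l : List ℕ} (hl : ∀ m ∈ idxSet n, m ∈ l) (hb : 0 < b)
    (h : ceilSum n ! l * b ≤ a * n !) : HSJ (Perm (Fin n)) ≤ a / b := by
  refine (HSJ_le_ceilSum (Nat.factorial_pos n) hl).trans ?_
  rw [div_le_div_iff₀ (by exact_mod_cast Nat.factorial_pos n) (by exact_mod_cast hb)]
  exact_mod_cast h

lemma HSJ_one : HSJ (Perm (Fin 1)) ≤ 1 := by
  have := HSJ_le_of_ceilSum (a := 1) (b := 1) (mem_idxTable 1 (by norm_num)) one_pos (by decide)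
  simpa using this

lemma HSJ_two : HSJ (Perm (Fin 2)) ≤ 3 / 2 := by
  exact_mod_cast HSJ_le_of_ceilSum (a := 3) (b := 2) (mem_idxTable 2 (by norm_num)) two_pos
    (by decide)

lemma HSJ_four_le : HSJ (Perm (Fin 4)) ≤ 5 / 2 := by
  exact_mod_cast HSJ_le_of_ceilSum (a := 5) (b := 2) (mem_idxTable 4 (by norm_num)) two_pos
    (by decide +kernel)

lemma HSJ_small {n : ℕ} (h3 : 3 ≤ n) (h6 : n ≤ 6) (h4 : n ≠ 4) :
    HSJ (Perm (Fin n)) ≤ 23 / 10 := by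
  have key : ∀ n < 7, 3 ≤ n → n ≠ 4 → ceilSum n ! (idxTable n) * 10 ≤ 23 * n ! := by
    decide +kernel
  exact_mod_cast HSJ_le_of_ceilSum (a := 23) (b := 10) (mem_idxTable n (by omega)) (by norm_num)
    (key n (by omega) h3 h4)

/-- The extension of `idxTable` to degree 12, with repetitions. -/
def idxTable' (n : ℕ) : List ℕ := if n = 12 then nextList idxTable 12 else idxTable n

lemma mem_idxTable' : ∀ n < 13, ∀ m ∈ idxSet n, m ∈ idxTable' n := by
  intro n hn m hm
  rcases Nat.lt_succ_iff_lt_or_eq.1 hn with h | rfl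
  · rw [idxTable', if_neg (by omega)]; exact mem_idxTable n h m hm
  · exact mem_nextList (by norm_num) mem_idxTable hm

lemma HSJ_medium {n : ℕ} (h7 : 7 ≤ n) (h13 : n ≤ 13) : HSJ (Perm (Fin n)) ≤ 199 / 100 := by
  rcases h13.lt_or_eq with h | rfl
  · have key : ∀ n < 13, 7 ≤ n → ceilSum n ! (idxTable' n) * 100 ≤ 199 * n ! := by
      decide +kernel
    exact_mod_cast HSJ_le_of_ceilSum (a := 199) (b := 100) (mem_idxTable' n h) (by norm_num)
      (key n h h7)
  · exact_mod_cast HSJ_le_of_ceilSum (n := 13) (a := 199) (b := 100)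
      (fun m => mem_nextList (T := idxTable') (by norm_num) mem_idxTable') (by norm_num)
      (by decide +kernel)

lemma mem_idxSet_of_card {n : ℕ} (H : Subgroup (Perm (Fin n))) {c m : ℕ} (h : Nat.card H = c)
    (hm : c * m = n !) : m ∈ idxSet n := by
  refine ⟨H, ?_⟩
  have h1 := H.card_mul_index
  rw [card_perm_eq, Nat.card_fin, ← hm, h] at h1
  exact Nat.eq_of_mul_eq_mul_left (h ▸ Nat.card_pos) h1

/-- Every divisor of `24 = |S_4|` is the order of a subgroup of `S_4`. -/
lemma le_HSJ_four : 5 / 2 ≤ HSJ (Perm (Fin 4)) := by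
  have hpow : ∀ p k m : ℕ, p.Prime → p ^ k * m = 4 ! → m ∈ idxSet 4 := by
    intro p k m hp h
    have := Fact.mk hp
    obtain ⟨H, hH⟩ := Sylow.exists_subgroup_card_pow_prime (G := Perm (Fin 4)) p (n := k)
      (by rw [card_perm_eq, Nat.card_fin, ← h]; exact dvd_mul_right _ _)
    exact mem_idxSet_of_card H hH h
  have h1 : 1 ∈ idxSet 4 := ⟨⊤, Subgroup.index_top⟩
  have h2 : 2 ∈ idxSet 4 := ⟨alternatingGroup (Fin 4), alternatingGroup.index_eq_two⟩
  have h3 : 3 ∈ idxSet 4 := hpow 2 3 3 Nat.prime_two rfl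
  have h4 : 4 ∈ idxSet 4 := ⟨stabilizer (Perm (Fin 4)) (0 : Fin 4), by
    simp only
    rw [index_stabilizer_of_transitive, Nat.card_fin]⟩
  have h6 : 6 ∈ idxSet 4 := hpow 2 2 6 Nat.prime_two rfl
  have h8 : 8 ∈ idxSet 4 := hpow 3 1 8 Nat.prime_three rfl
  have h12 : 12 ∈ idxSet 4 := hpow 2 1 12 Nat.prime_two rfl
  have h24 : 24 ∈ idxSet 4 := hpow 2 0 24 Nat.prime_two rfl
  have hsub : ({1, 2, 3, 4, 6, 8, 12, 24} : Finset ℕ) ⊆ idx 4 := by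
    intro m hm
    rw [mem_idx]
    simp only [Finset.mem_insert, Finset.mem_singleton] at hm
    rcases hm with rfl | rfl | rfl | rfl | rfl | rfl | rfl | rfl <;> assumption
  rw [HSJ_eq_sum]
  refine le_trans (le_of_eq ?_) (Finset.sum_le_sum_of_subset_of_nonneg hsub fun _ _ _ => ?_)
  · norm_num
  · positivity

/-! ### Reduction to large indices of transitive subgroups -/

/-- The divisors of `n!` that satisfy the constraint of `idxSet_cases` on the index of a
transitive subgroup of `S_n` not containing `A_n`. -/
noncomputable def transIdx (n : ℕ) : Finset ℕ := by
  classical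
  exact (n !).divisors.filter fun m => (6 ∣ m ∧ ((n + 1) / 2)! ≤ m) ∨
    ∃ a b, a * b = n ∧ 1 < a ∧ a < n ∧ n ! ∣ m * (a ! ^ b * b !)

lemma mem_transIdx {n m : ℕ} : m ∈ transIdx n ↔ m ∈ (n !).divisors ∧
    ((6 ∣ m ∧ ((n + 1) / 2)! ≤ m) ∨
      ∃ a b, a * b = n ∧ 1 < a ∧ a < n ∧ n ! ∣ m * (a ! ^ b * b !)) := by
  classical
  rw [transIdx, Finset.mem_filter]

lemma sum_union_le {s t : Finset ℕ} {f : ℕ → ℝ} (hf : ∀ m, 0 ≤ f m) :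
    ∑ m ∈ s ∪ t, f m ≤ ∑ m ∈ s, f m + ∑ m ∈ t, f m := by
  rw [← Finset.sum_union_inter]
  exact le_add_of_nonneg_right (Finset.sum_nonneg fun m _ => hf m)

/-- The recursive upper bound: `3/2` for `A_n` and `S_n`, the contribution of the intransitive
subgroups, and that of the other transitive ones. -/
lemma HSJ_le_split {n : ℕ} (hn : 3 ≤ n) : HSJ (Perm (Fin n)) ≤ 3 / 2 +
    ∑ k ∈ Finset.Icc 1 (n / 2), HSJ (Perm (Fin k)) * HSJ (Perm (Fin (n - k))) / n.choose k +
    ∑ m ∈ transIdx n, (1 : ℝ) / m := by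
  classical
  set A := (Finset.Icc 1 (n / 2)).sigma fun k => idx k ×ˢ idx (n - k) with hA
  set g : (Σ _ : ℕ, ℕ × ℕ) → ℕ := fun q => n.choose q.1 * q.2.1 * q.2.2 with hg
  have hsub : idx n ⊆ (({1, 2} : Finset ℕ) ∪ A.image g) ∪ transIdx n := by
    intro m hm
    rw [Finset.mem_union, Finset.mem_union]
    have hm' := mem_idx.1 hm
    rcases idxSet_cases hn hm' with h | ⟨k, hk1, hk2, i, hi, j, hj, h⟩ | ⟨-, h⟩
    · exact Or.inl (Or.inl (by simpa using h))
    · refine Or.inl (Or.inr (Finset.mem_image.2 ⟨⟨k, i, j⟩, ?_, h.symm⟩))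
      rw [hA, Finset.mem_sigma, Finset.mem_product]
      exact ⟨Finset.mem_Icc.2 ⟨hk1, hk2⟩, mem_idx.2 hi, mem_idx.2 hj⟩
    · exact Or.inr (mem_transIdx.2
        ⟨Nat.mem_divisors.2 ⟨idxSet_dvd hm', (Nat.factorial_pos n).ne'⟩, h⟩)
  have hf : ∀ m : ℕ, (0 : ℝ) ≤ 1 / m := fun m => by positivity
  have himg : ∑ m ∈ A.image g, (1 : ℝ) / m ≤
      ∑ k ∈ Finset.Icc 1 (n / 2), HSJ (Perm (Fin k)) * HSJ (Perm (Fin (n - k))) / n.choose k := by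
    refine (Finset.sum_image_le_of_nonneg (f := fun m : ℕ => (1 : ℝ) / m) (fun m _ => hf m)).trans (le_of_eq ?_)
    rw [hA, Finset.sum_sigma]
    refine Finset.sum_congr rfl fun k _ => ?_
    rw [HSJ_eq_sum, HSJ_eq_sum, Finset.sum_mul_sum, ← Finset.sum_product', Finset.sum_div]
    refine Finset.sum_congr rfl fun q _ => ?_
    simp only [hg, Nat.cast_mul]
    rw [one_div_mul_one_div, div_div]
    congr 1
    ring
  rw [HSJ_eq_sum]
  calc ∑ m ∈ idx n, (1 : ℝ) / m
      ≤ ∑ m ∈ (({1, 2} : Finset ℕ) ∪ A.image g) ∪ transIdx n, (1 : ℝ) / m :=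
        Finset.sum_le_sum_of_subset_of_nonneg hsub fun m _ _ => hf m
    _ ≤ (∑ m ∈ ({1, 2} : Finset ℕ), (1 : ℝ) / m + ∑ m ∈ A.image g, (1 : ℝ) / m) +
        ∑ m ∈ transIdx n, (1 : ℝ) / m :=
        (sum_union_le hf).trans (add_le_add_left (sum_union_le hf) _)
    _ ≤ _ := by
        have : ∑ m ∈ ({1, 2} : Finset ℕ), (1 : ℝ) / m = 3 / 2 := by norm_num
        rw [this]
        linarith

lemma choose_three_le {n k : ℕ} (h3 : 3 ≤ k) (hk : k ≤ n / 2) : n.choose 3 ≤ n.choose k := by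
  induction k, h3 using Nat.le_induction with
  | base => exact le_rfl
  | succ k h3 ih => exact (ih (by omega)).trans (Nat.choose_le_succ_of_lt_half_left (by omega))

/-- For `n ≥ 14` the intransitive subgroups contribute at most `1/4`. -/
lemma intransitive_sum_le {n : ℕ} (hn : 14 ≤ n)
    (h1 : ∀ k, 3 ≤ k → k < n → HSJ (Perm (Fin k)) ≤ 5 / 2)
    (h2 : ∀ k, 7 ≤ k → k < n → HSJ (Perm (Fin k)) ≤ 2) :
    ∑ k ∈ Finset.Icc 1 (n / 2), HSJ (Perm (Fin k)) * HSJ (Perm (Fin (n - k))) / n.choose k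
      ≤ 1 / 4 := by
  have hsplit : Finset.Icc 1 (n / 2) = insert 1 (insert 2 (Finset.Icc 3 (n / 2))) := by
    ext x; simp only [Finset.mem_Icc, Finset.mem_insert]; omega
  rw [hsplit, Finset.sum_insert (by simp), Finset.sum_insert (by simp)]
  obtain ⟨t, rfl⟩ : ∃ t, n = t + 14 := ⟨n - 14, by omega⟩
  have ht : (0 : ℝ) ≤ t := Nat.cast_nonneg t
  have p1 : (0 : ℝ) ≤ t + 14 := by positivity
  have p2 : (0 : ℝ) ≤ (t + 14) * (t + 13) / 2 := by positivity
  have p3 : (0 : ℝ) ≤ 5 / ((t + 14) * (t + 13) * (t + 12) / 6) := by positivity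
  have hfinal : 2 / ((t : ℝ) + 14) + (3 / (((t : ℝ) + 14) * (t + 13) / 2) +
      ((t : ℝ) + 10) / 2 * (5 / (((t : ℝ) + 14) * (t + 13) * (t + 12) / 6))) ≤ 1 / 4 := by
    rw [show 2 / ((t : ℝ) + 14) + (3 / (((t : ℝ) + 14) * (t + 13) / 2) +
      ((t : ℝ) + 10) / 2 * (5 / (((t : ℝ) + 14) * (t + 13) * (t + 12) / 6))) =
      (2 * (t + 13) * (t + 12) + 6 * (t + 12) + 15 * (t + 10)) /
        (((t : ℝ) + 14) * (t + 13) * (t + 12)) by field_simp; ring]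
    rw [div_le_div_iff₀ (by positivity) (by norm_num)]
    have h3 : 0 ≤ (t : ℝ) ^ 3 := by positivity
    have h4 : 0 ≤ (t : ℝ) ^ 2 := by positivity
    nlinarith
  have c1 : (((t + 14).choose 1 : ℕ) : ℝ) = t + 14 := by simp
  have c2 : (((t + 14).choose 2 : ℕ) : ℝ) = (t + 14) * (t + 13) / 2 := by
    rw [Nat.cast_choose_two]; push_cast; ring
  have c3 : (((t + 14).choose 3 : ℕ) : ℝ) = (t + 14) * (t + 13) * (t + 12) / 6 := by
    have h := Nat.add_one_mul_choose_eq (t + 13) 2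
    have h' : ((t : ℝ) + 14) * ((t + 13).choose 2 : ℕ) = ((t + 14).choose 3 : ℕ) * 3 := by
      exact_mod_cast h
    rw [Nat.cast_choose_two] at h'
    push_cast at h'
    linarith
  have b1 : HSJ (Perm (Fin 1)) * HSJ (Perm (Fin (t + 14 - 1))) / ((t + 14).choose 1 : ℕ)
      ≤ 2 / (t + 14) := by
    rw [c1]
    refine div_le_div_of_nonneg_right ?_ p1
    refine (mul_le_mul HSJ_one (h2 (t + 14 - 1) (by omega) (by omega)) (HSJ_nonneg _)
      zero_le_one).trans
      (by norm_num)
  have b2 : HSJ (Perm (Fin 2)) * HSJ (Perm (Fin (t + 14 - 2))) / ((t + 14).choose 2 : ℕ)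
      ≤ 3 / ((t + 14) * (t + 13) / 2) := by
    rw [c2]
    refine div_le_div_of_nonneg_right ?_ p2
    refine (mul_le_mul HSJ_two (h2 (t + 14 - 2) (by omega) (by omega)) (HSJ_nonneg _)
      (by norm_num)).trans
      (by norm_num)
  have b3 : ∑ k ∈ Finset.Icc 3 ((t + 14) / 2),
      HSJ (Perm (Fin k)) * HSJ (Perm (Fin (t + 14 - k))) / ((t + 14).choose k : ℕ)
      ≤ (t + 10) / 2 * (5 / ((t + 14) * (t + 13) * (t + 12) / 6)) := by
    have hcard : (((t + 14) / 2 + 1 - 3 : ℕ) : ℝ) ≤ (t + 10) / 2 := by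
      rw [le_div_iff₀ (by norm_num)]
      have : ((t + 14) / 2 + 1 - 3) * 2 ≤ t + 10 := by omega
      exact_mod_cast this
    refine (Finset.sum_le_card_nsmul _ _ (5 / (((t : ℝ) + 14) * (t + 13) * (t + 12) / 6))
      fun k hk => ?_).trans ?_
    · rw [Finset.mem_Icc] at hk
      rw [← c3]
      have hc : ((t + 14).choose 3 : ℝ) ≤ (t + 14).choose k := by
        exact_mod_cast choose_three_le hk.1 hk.2
      have hpos : (0 : ℝ) < (t + 14).choose 3 := by
        exact_mod_cast Nat.choose_pos (by omega)
      refine div_le_div₀ (by norm_num) ?_ hpos hc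
      refine (mul_le_mul (h1 k hk.1 (by omega)) (h2 (t + 14 - k) (by omega) (by omega))
        (HSJ_nonneg _) (by norm_num)).trans (by norm_num)
    · rw [Nat.card_Icc, nsmul_eq_mul]
      exact mul_le_mul_of_nonneg_right hcard p3
  exact (add_le_add b1 (add_le_add b2 b3)).trans hfinal

/-! ### The transitive contribution in degrees 14 to 22 -/

/-- A finite sum over `N`-smooth numbers is at most the corresponding Euler product. -/
lemma sum_le_prod_primesBelow (f : ℕ →* ℝ) (h0 : ∀ m, 0 ≤ f m) (h1 : ∀ p, Nat.Prime p → f p < 1)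
    (N : ℕ) (s : Finset ℕ) (hs : ∀ m ∈ s, m ∈ N.smoothNumbers) :
    ∑ m ∈ s, f m ≤ ∏ p ∈ N.primesBelow, (1 - f p)⁻¹ := by
  classical
  have h := (EulerProduct.summable_and_hasSum_smoothNumbers_prod_primesBelow_geometric
    (f := f) (fun {_} hp => by rw [Real.norm_of_nonneg (h0 _)]; exact h1 _ hp) N).2
  rw [← Finset.sum_subtype_of_mem f hs]
  exact sum_le_hasSum _ (fun m _ => h0 _) h

lemma mem_smoothNumbers_of_dvd {n m : ℕ} (h : m ∣ n !) : m ∈ (n + 1).smoothNumbers :=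
  Nat.mem_smoothNumbers'.2 fun _ hp hpm =>
    Nat.lt_succ_of_le ((Nat.Prime.dvd_factorial hp).1 (hpm.trans h))

/-- If every `a!^b b!` with `ab = n` and `1 < a < n` is at most `n!/Y`, and `Y ≤ ⌈n/2⌉!`, then
every element of `transIdx n` is at least `Y`. -/
lemma le_of_mem_transIdx {n Y m : ℕ} (hY : Y ≤ ((n + 1) / 2)!)
    (h : ∀ a b, a * b = n → 1 < a → a < n → Y * (a ! ^ b * b !) ≤ n !)
    (hm : m ∈ transIdx n) : Y ≤ m := by
  obtain ⟨h0, h1 | ⟨a, b, hab, h1, h2, hd⟩⟩ := mem_transIdx.1 hm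
  · exact hY.trans h1.2
  · have hpos : 0 < a ! ^ b * b ! := by positivity
    have hm0 : 0 < m := Nat.pos_of_mem_divisors h0
    exact Nat.le_of_mul_le_mul_right ((h a b hab h1 h2).trans (Nat.le_of_dvd (by positivity) hd)) hpos

/-- A lower approximation to `K · ∑ 1/d` over the divisors `d < Y` of `F` in
`[lo, lo + 2 ^ k)`, summed by bisection. -/
def floorSum (K Y F : ℕ) : ℕ → ℕ → ℕ
  | 0, lo => if lo < Y ∧ F % lo = 0 then K / lo else 0
  | k + 1, lo => floorSum K Y F k lo + floorSum K Y F k (lo + 2 ^ k)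

lemma floorSum_le (K Y F k lo : ℕ) : (floorSum K Y F k lo : ℝ) ≤
    K * ∑ d ∈ (Finset.Ico lo (lo + 2 ^ k)).filter (fun d => d < Y ∧ d ∣ F), (1 : ℝ) / d := by
  induction k generalizing lo with
  | zero =>
    rw [floorSum, pow_zero, Nat.Ico_succ_singleton, Finset.filter_singleton]
    by_cases h : lo < Y ∧ F % lo = 0
    · rw [if_pos h, if_pos ⟨h.1, Nat.dvd_of_mod_eq_zero h.2⟩, Finset.sum_singleton, mul_one_div]
      exact Nat.cast_div_le
    · rw [if_neg h, if_neg fun h' => h ⟨h'.1, Nat.mod_eq_zero_of_dvd h'.2⟩]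
      simp
  | succ k ih =>
    have hu : Finset.Ico lo (lo + 2 ^ (k + 1)) =
        Finset.Ico lo (lo + 2 ^ k) ∪ Finset.Ico (lo + 2 ^ k) (lo + 2 ^ k + 2 ^ k) := by
      rw [Finset.Ico_union_Ico_eq_Ico (Nat.le_add_right _ _) (Nat.le_add_right _ _), pow_succ]
      congr 1; ring
    rw [floorSum, hu, Finset.filter_union, Finset.sum_union, mul_add]
    · push_cast
      exact add_le_add (ih _) (ih _)
    · exact Finset.disjoint_filter_filter (Finset.Ico_disjoint_Ico_consecutive _ _ _)

/-- The elements of `transIdx n` and the divisors of `n!` below `Y` are distinct `n`-smooth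
numbers, so that the reciprocals of the former are bounded by what the latter leave of the Euler
product. -/
lemma transIdx_sum_le_sub {n Y F K k : ℕ} (hK : 0 < K) (hF : F = n !) (hY : Y ≤ ((n + 1) / 2)!)
    (h : ∀ a ∈ Finset.Ioo 1 n, a ∣ n → Y * (a ! ^ (n / a) * (n / a)!) ≤ F) :
    ∑ m ∈ transIdx n, (1 : ℝ) / m ≤
      ∏ p ∈ (n + 1).primesBelow, (1 - (p : ℝ)⁻¹)⁻¹ - (floorSum K Y F k 0 : ℝ) / K := by
  classical
  have hKr : (0 : ℝ) < K := by exact_mod_cast hK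
  set D := (Finset.Ico 0 (0 + 2 ^ k)).filter (fun d => d < Y ∧ d ∣ F) with hD
  let f : ℕ →* ℝ :=
    { toFun := fun m => (1 : ℝ) / m
      map_one' := by simp
      map_mul' := fun x y => by push_cast; rw [one_div_mul_one_div] }
  have hdisj : Disjoint (transIdx n) D := by
    rw [Finset.disjoint_left]
    intro m hm hm'
    have h1 : Y ≤ m := le_of_mem_transIdx hY (fun a b hab h1 h2 => by
      have hb : n / a = b := by rw [← hab]; exact Nat.mul_div_cancel_left _ (by omega)
      have := h a (Finset.mem_Ioo.2 ⟨h1, h2⟩) ⟨b, hab.symm⟩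
      rwa [hb, hF] at this) hm
    exact absurd (Finset.mem_filter.1 hm').2.1 (by omega)
  have hE := sum_le_prod_primesBelow f (fun m => by simp [f])
    (fun p hp => by
      have : (1 : ℝ) < p := by exact_mod_cast hp.one_lt
      change (1 : ℝ) / p < 1
      rw [div_lt_one (by linarith)]; exact this) (n + 1) (transIdx n ∪ D) (by
        intro m hm
        rcases Finset.mem_union.1 hm with hm | hm
        · exact mem_smoothNumbers_of_dvd (Nat.dvd_of_mem_divisors (mem_transIdx.1 hm).1)
        · exact mem_smoothNumbers_of_dvd (hF ▸ (Finset.mem_filter.1 hm).2.2))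
  rw [Finset.sum_union hdisj] at hE
  have hfl : (floorSum K Y F k 0 : ℝ) / K ≤ ∑ d ∈ D, (1 : ℝ) / d := by
    rw [div_le_iff₀ hKr, mul_comm]
    exact floorSum_le K Y F k 0
  have hprod : ∏ p ∈ (n + 1).primesBelow, (1 - f p)⁻¹ =
      ∏ p ∈ (n + 1).primesBelow, (1 - (p : ℝ)⁻¹)⁻¹ :=
    Finset.prod_congr rfl fun p _ => by simp [f]
  rw [hprod] at hE
  change ∑ m ∈ transIdx n, (1 : ℝ) / m + ∑ d ∈ D, (1 : ℝ) / d ≤ _ at hE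
  linarith

/-- `transIdx_sum_le_sub` in units of `10⁻⁶`; the sum over `d < 2 ^ 13` includes all `d < Y` when
`Y` is at most 6000. -/
lemma transIdx_sum_lt_of_floorSum {n Y F E c : ℕ} (P : Finset ℕ) (hF : F = n !)
    (hY : Y ≤ ((n + 1) / 2)!)
    (h : ∀ a ∈ Finset.Ioo 1 n, a ∣ n → Y * (a ! ^ (n / a) * (n / a)!) ≤ F)
    (hP : (n + 1).primesBelow = P) (hE : ∏ p ∈ P, (1 - (p : ℝ)⁻¹)⁻¹ ≤ E / 10 ^ 6)
    (hc : c ≤ floorSum (10 ^ 6) Y F 13 0) (hEc : E < c + 250000) :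
    ∑ m ∈ transIdx n, (1 : ℝ) / m < 1 / 4 := by
  have h1 := transIdx_sum_le_sub (K := 10 ^ 6) (k := 13) (by norm_num) hF hY h
  rw [hP] at h1
  have h2 : (c : ℝ) ≤ floorSum (10 ^ 6) Y F 13 0 := by exact_mod_cast hc
  have h3 : (E : ℝ) < c + 250000 := by exact_mod_cast hEc
  push_cast at h1
  have h4 : (c : ℝ) / 10 ^ 6 ≤ (floorSum (10 ^ 6) Y F 13 0 : ℝ) / 10 ^ 6 :=
    div_le_div_of_nonneg_right h2 (by norm_num)
  have h5 : (E : ℝ) / 10 ^ 6 < (c + 250000) / 10 ^ 6 :=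
    div_lt_div_of_pos_right h3 (by norm_num)
  have h6 : ((c : ℝ) + 250000) / 10 ^ 6 = c / 10 ^ 6 + 1 / 4 := by ring
  linarith

/-- The degrees `14 ≤ n ≤ 22`. In units of `10⁻⁶`, `E` is the Euler product rounded up and `c` is a
lower bound for the sum of the reciprocals of the divisors of `n!` below `Y`. -/
lemma transIdx_sum_lt_of_le {n : ℕ} (h14 : 14 ≤ n) (h22 : n ≤ 22) :
    ∑ m ∈ transIdx n, (1 : ℝ) / m < 1 / 4 := by
  interval_cases n
  · exact transIdx_sum_lt_of_floorSum (Y := 1700) (F := 87178291200) (E := 5213542) (c := 4984000)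
      {2, 3, 5, 7, 11, 13} (by decide) (by decide) (by decide +kernel) (by decide +kernel)
      (by norm_num) (by decide +kernel) (by norm_num)
  · exact transIdx_sum_lt_of_floorSum (Y := 6000) (F := 1307674368000) (E := 5213542) (c := 5074000)
      {2, 3, 5, 7, 11, 13} (by decide) (by decide) (by decide +kernel) (by decide +kernel)
      (by norm_num) (by decide +kernel) (by norm_num)
  · exact transIdx_sum_lt_of_floorSum (Y := 6000) (F := 20922789888000) (E := 5213542) (c := 5074000)
      {2, 3, 5, 7, 11, 13} (by decide) (by decide) (by decide +kernel) (by decide +kernel)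
      (by norm_num) (by decide +kernel) (by norm_num)
  · exact transIdx_sum_lt_of_floorSum (Y := 6000) (F := 355687428096000) (E := 5539389) (c := 5356000)
      {2, 3, 5, 7, 11, 13, 17} (by decide) (by decide) (by decide +kernel) (by decide +kernel)
      (by norm_num) (by decide +kernel) (by norm_num)
  · exact transIdx_sum_lt_of_floorSum (Y := 6000) (F := 6402373705728000) (E := 5539389) (c := 5357000)
      {2, 3, 5, 7, 11, 13, 17} (by decide) (by decide) (by decide +kernel) (by decide +kernel)
      (by norm_num) (by decide +kernel) (by norm_num)
  · exact transIdx_sum_lt_of_floorSum (Y := 6000) (F := 121645100408832000) (E := 5847132) (c := 5619000)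
      {2, 3, 5, 7, 11, 13, 17, 19} (by decide) (by decide) (by decide +kernel) (by decide +kernel)
      (by norm_num) (by decide +kernel) (by norm_num)
  · exact transIdx_sum_lt_of_floorSum (Y := 6000) (F := 2432902008176640000) (E := 5847132) (c := 5623000)
      {2, 3, 5, 7, 11, 13, 17, 19} (by decide) (by decide) (by decide +kernel) (by decide +kernel)
      (by norm_num) (by decide +kernel) (by norm_num)
  · exact transIdx_sum_lt_of_floorSum (Y := 6000) (F := 51090942171709440000) (E := 5847132) (c := 5633000)
      {2, 3, 5, 7, 11, 13, 17, 19} (by decide) (by decide) (by decide +kernel) (by decide +kernel)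
      (by norm_num) (by decide +kernel) (by norm_num)
  · exact transIdx_sum_lt_of_floorSum (Y := 6000) (F := 1124000727777607680000) (E := 5847132) (c := 5666000)
      {2, 3, 5, 7, 11, 13, 17, 19} (by decide) (by decide) (by decide +kernel) (by decide +kernel)
      (by norm_num) (by decide +kernel) (by norm_num)

/-! ### The transitive contribution in degrees at least 23 -/

lemma two_pow_mul_factorial_le_ascFactorial {N k : ℕ} (hk : 1 ≤ k) (h3 : 3 ≤ N) (hN : k ≤ N) :
    2 ^ (k + 1) * k ! ≤ (N + 1).ascFactorial k := by
  induction k, hk using Nat.le_induction with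
  | base => simp [Nat.ascFactorial]; omega
  | succ k hk ih =>
    rw [Nat.ascFactorial_succ, Nat.factorial_succ]
    calc 2 ^ (k + 1 + 1) * ((k + 1) * k !) = (2 * (k + 1)) * (2 ^ (k + 1) * k !) := by ring
      _ ≤ _ := Nat.mul_le_mul (by omega) (ih (by omega))

/-- The wreath product `S_a ≀ S_b`, of order `a!^b b!`, has index at least `2^{ab}/(4a)` in
`S_{ab}`. -/
lemma two_pow_mul_wreath_le {a b : ℕ} (ha : 2 ≤ a) (hb : 2 ≤ b) :
    2 ^ (a * b) * (a ! ^ b * b !) ≤ 4 * a * (a * b)! := by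
  induction b, hb using Nat.le_induction with
  | base =>
    have h := Nat.four_pow_le_two_mul_self_mul_centralBinom a (by omega)
    have h' : (a * 2)! = a.centralBinom * (a ! * a !) := by
      rw [Nat.centralBinom, mul_comm a 2]
      have := Nat.choose_mul_factorial_mul_factorial (show a ≤ 2 * a by omega)
      rw [show 2 * a - a = a by omega] at this
      rw [← this]; ring
    calc 2 ^ (a * 2) * (a ! ^ 2 * 2 !) = 4 ^ a * (2 * (a ! * a !)) := by
          rw [mul_comm a 2, pow_mul]; norm_num [Nat.factorial]; ring
      _ ≤ 2 * a * a.centralBinom * (2 * (a ! * a !)) := Nat.mul_le_mul_right _ h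
      _ = _ := by rw [h']; ring
  | succ b hb ih =>
    obtain ⟨k, rfl⟩ : ∃ k, a = k + 1 := ⟨a - 1, by omega⟩
    have hN : (k + 1) * 2 ≤ (k + 1) * b := Nat.mul_le_mul_left _ hb
    have h1 := two_pow_mul_factorial_le_ascFactorial (N := (k + 1) * b) (k := k)
      (by omega) (by omega) (by omega)
    have h2 : 2 ^ (k + 1) * ((k + 1)! * (b + 1)) ≤ ((k + 1) * b + 1).ascFactorial (k + 1) := by
      rw [Nat.ascFactorial_succ, Nat.factorial_succ]
      calc 2 ^ (k + 1) * ((k + 1) * k ! * (b + 1))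
          = ((k + 1) * b + 1 + k) * (2 ^ (k + 1) * k !) := by ring
        _ ≤ _ := Nat.mul_le_mul_left _ h1
    calc 2 ^ ((k + 1) * (b + 1)) * ((k + 1)! ^ (b + 1) * (b + 1)!)
        = (2 ^ ((k + 1) * b) * ((k + 1)! ^ b * b !)) * (2 ^ (k + 1) * ((k + 1)! * (b + 1))) := by
          rw [Nat.factorial_succ b]; ring
      _ ≤ 4 * (k + 1) * ((k + 1) * b)! * ((k + 1) * b + 1).ascFactorial (k + 1) :=
          Nat.mul_le_mul ih h2
      _ = _ := by
          rw [mul_assoc, Nat.factorial_mul_ascFactorial]; rfl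

lemma four_pow_le_factorial {k : ℕ} (hk : 9 ≤ k) : 4 ^ k ≤ k ! := by
  induction k, hk using Nat.le_induction with
  | base => decide
  | succ k hk ih =>
    rw [pow_succ, Nat.factorial_succ, mul_comm]
    exact Nat.mul_le_mul (by omega) ih

lemma two_pow_le_of_mem_transIdx {n m : ℕ} (hn : 23 ≤ n) (hm : m ∈ transIdx n) :
    2 ^ n ≤ 2 * n * m := by
  obtain ⟨h0, h1 | ⟨a, b, rfl, h1, h2, hd⟩⟩ := mem_transIdx.1 hm
  · calc 2 ^ n ≤ 2 ^ (2 * ((n + 1) / 2)) := Nat.pow_le_pow_right (by norm_num) (by omega)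
      _ = 4 ^ ((n + 1) / 2) := by rw [pow_mul]; norm_num
      _ ≤ ((n + 1) / 2)! := four_pow_le_factorial (by omega)
      _ ≤ m := h1.2
      _ ≤ 2 * n * m := Nat.le_mul_of_pos_left _ (by omega)
  · have hm0 : 0 < m := Nat.pos_of_mem_divisors h0
    have hpos : 0 < a ! ^ b * b ! := by positivity
    have hb : 2 ≤ b := by
      by_contra hb
      interval_cases b <;> omega
    have hle := Nat.le_of_dvd (by positivity) hd
    refine Nat.le_of_mul_le_mul_right ((two_pow_mul_wreath_le h1 hb).trans ?_) hpos
    calc 4 * a * (a * b)! ≤ 4 * a * (m * (a ! ^ b * b !)) := Nat.mul_le_mul_left _ hle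
      _ = (2 * (a * 2) * m) * (a ! ^ b * b !) := by ring
      _ ≤ (2 * (a * b) * m) * (a ! ^ b * b !) := by gcongr

/-- The Euler product of the series `∑ 1/√m` over the `n`-smooth numbers `m`. -/
noncomputable def sqrtProd (n : ℕ) : ℝ := ∏ p ∈ (n + 1).primesBelow, (1 - (√(p : ℝ))⁻¹)⁻¹

lemma inv_one_sub_inv_sqrt_le {p s r : ℝ} (hs : 1 < s) (h : s ^ 2 ≤ p) (hr : (1 - s⁻¹)⁻¹ ≤ r) :
    (1 - (√p)⁻¹)⁻¹ ≤ r := by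
  refine le_trans ?_ hr
  have h1 : s ≤ √p := Real.le_sqrt_of_sq_le h
  have h2 : s⁻¹ < 1 := inv_lt_one_of_one_lt₀ hs
  have h3 : (√p)⁻¹ ≤ s⁻¹ := inv_anti₀ (by linarith) h1
  exact inv_anti₀ (by linarith) (by linarith)

lemma inv_one_sub_inv_sqrt_nonneg {p : ℕ} (hp : 1 ≤ p) : 0 ≤ (1 - (√(p : ℝ))⁻¹)⁻¹ := by
  have h : (1 : ℝ) ≤ √(p : ℝ) := Real.one_le_sqrt.2 (by exact_mod_cast hp)
  have := inv_le_one_of_one_le₀ h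
  exact inv_nonneg.2 (by linarith)

lemma sqrtProd_nonneg (n : ℕ) : 0 ≤ sqrtProd n :=
  Finset.prod_nonneg fun _ hp =>
    inv_one_sub_inv_sqrt_nonneg (Nat.prime_of_mem_primesBelow hp).one_lt.le

lemma sqrtProd_twentyThree : sqrtProd 23 ≤ 106.75 := by
  rw [sqrtProd, show Nat.primesBelow (23 + 1) = {2, 3, 5, 7, 11, 13, 17, 19, 23} by decide]
  -- Every square root is replaced by its truncation to three decimals.
  have h2 : (1 - (√((2 : ℕ) : ℝ))⁻¹)⁻¹ ≤ 3.416 :=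
    inv_one_sub_inv_sqrt_le (s := 1.414) (by norm_num) (by norm_num) (by norm_num)
  have h3 : (1 - (√((3 : ℕ) : ℝ))⁻¹)⁻¹ ≤ 2.367 :=
    inv_one_sub_inv_sqrt_le (s := 1.732) (by norm_num) (by norm_num) (by norm_num)
  have h5 : (1 - (√((5 : ℕ) : ℝ))⁻¹)⁻¹ ≤ 1.810 :=
    inv_one_sub_inv_sqrt_le (s := 2.236) (by norm_num) (by norm_num) (by norm_num)
  have h7 : (1 - (√((7 : ℕ) : ℝ))⁻¹)⁻¹ ≤ 1.608 :=
    inv_one_sub_inv_sqrt_le (s := 2.645) (by norm_num) (by norm_num) (by norm_num)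
  have h11 : (1 - (√((11 : ℕ) : ℝ))⁻¹)⁻¹ ≤ 1.432 :=
    inv_one_sub_inv_sqrt_le (s := 3.316) (by norm_num) (by norm_num) (by norm_num)
  have h13 : (1 - (√((13 : ℕ) : ℝ))⁻¹)⁻¹ ≤ 1.384 :=
    inv_one_sub_inv_sqrt_le (s := 3.605) (by norm_num) (by norm_num) (by norm_num)
  have h17 : (1 - (√((17 : ℕ) : ℝ))⁻¹)⁻¹ ≤ 1.321 :=
    inv_one_sub_inv_sqrt_le (s := 4.123) (by norm_num) (by norm_num) (by norm_num)
  have h19 : (1 - (√((19 : ℕ) : ℝ))⁻¹)⁻¹ ≤ 1.298 :=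
    inv_one_sub_inv_sqrt_le (s := 4.358) (by norm_num) (by norm_num) (by norm_num)
  have h23 : (1 - (√((23 : ℕ) : ℝ))⁻¹)⁻¹ ≤ 1.264 :=
    inv_one_sub_inv_sqrt_le (s := 4.795) (by norm_num) (by norm_num) (by norm_num)
  have n3 := inv_one_sub_inv_sqrt_nonneg (p := 3) (by norm_num)
  have n5 := inv_one_sub_inv_sqrt_nonneg (p := 5) (by norm_num)
  have n7 := inv_one_sub_inv_sqrt_nonneg (p := 7) (by norm_num)
  have n11 := inv_one_sub_inv_sqrt_nonneg (p := 11) (by norm_num)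
  have n13 := inv_one_sub_inv_sqrt_nonneg (p := 13) (by norm_num)
  have n17 := inv_one_sub_inv_sqrt_nonneg (p := 17) (by norm_num)
  have n19 := inv_one_sub_inv_sqrt_nonneg (p := 19) (by norm_num)
  have n23 := inv_one_sub_inv_sqrt_nonneg (p := 23) (by norm_num)
  repeat rw [Finset.prod_insert (by decide)]
  rw [Finset.prod_singleton]
  refine le_trans (b := 3.416 * (2.367 * (1.810 * (1.608 * (1.432 * (1.384 * (1.321 * (1.298 * (1.264))))))))) ?_ (by norm_num)
  gcongr

lemma sqrtProd_succ_le {n : ℕ} (hn : 15 ≤ n) : sqrtProd (n + 1) ≤ sqrtProd n * (4 / 3) := by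
  have h0 := sqrtProd_nonneg n
  rw [sqrtProd, Nat.primesBelow_succ]
  split_ifs with hp
  · rw [Finset.prod_insert (Nat.notMem_primesBelow _), mul_comm]
    refine mul_le_mul_of_nonneg_left (inv_one_sub_inv_sqrt_le (s := 4) (by norm_num) ?_
      (by norm_num)) h0
    have : (16 : ℝ) ≤ ((n + 1 : ℕ) : ℝ) := by exact_mod_cast (by omega : 16 ≤ n + 1)
    linarith
  · change sqrtProd n ≤ _
    linarith

/-- The inequality that makes `√(2n/2^n) * sqrtProd n` smaller than `1/4`. The ratio of the two
sides decreases with `n`, since replacing `n` by `n + 1` multiplies `sqrtProd n` by at most `4/3`. -/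
lemma sqrtProd_sq_lt {n : ℕ} (hn : 23 ≤ n) : 16 * (2 * n * sqrtProd n ^ 2) < 2 ^ n := by
  induction n, hn using Nat.le_induction with
  | base =>
    have h1 := sqrtProd_twentyThree
    have h2 : sqrtProd 23 ^ 2 ≤ 106.75 ^ 2 := pow_le_pow_left₀ (sqrtProd_nonneg _) h1 2
    norm_num at h2 ⊢
    linarith
  | succ n hn ih =>
    have h1 : sqrtProd (n + 1) ^ 2 ≤ (sqrtProd n * (4 / 3)) ^ 2 :=
      pow_le_pow_left₀ (sqrtProd_nonneg _) (sqrtProd_succ_le (by omega)) 2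
    have hn' : (23 : ℝ) ≤ n := by exact_mod_cast hn
    have h0 := sq_nonneg (sqrtProd n)
    set x := sqrtProd n ^ 2 with hx
    rw [mul_pow, ← hx] at h1
    have h2 : (2 * ((n : ℝ) + 1)) * sqrtProd (n + 1) ^ 2 ≤ (2 * (n + 1)) * (x * (4 / 3) ^ 2) :=
      mul_le_mul_of_nonneg_left h1 (by linarith)
    have h3 : 0 ≤ (n - 8) * x := mul_nonneg (by linarith) h0
    rw [pow_succ (2 : ℝ) n]
    push_cast
    linarith

/-- The degrees `n ≥ 23`, by the Rankin trick: `1/m ≤ c/√m` for all `m` with `c⁻² ≤ m`. -/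
lemma transIdx_sum_lt_of_ge {n : ℕ} (hn : 23 ≤ n) : ∑ m ∈ transIdx n, (1 : ℝ) / m < 1 / 4 := by
  let f : ℕ →* ℝ :=
    { toFun := fun m => (√(m : ℝ))⁻¹
      map_one' := by simp
      map_mul' := fun x y => by
        rw [Nat.cast_mul, Real.sqrt_mul (Nat.cast_nonneg x), mul_inv] }
  have hE := sum_le_prod_primesBelow f (fun m => by simp [f])
    (fun p hp => by
      have : (1 : ℝ) < p := by exact_mod_cast hp.one_lt
      exact inv_lt_one_of_one_lt₀ (Real.lt_sqrt_of_sq_lt (by linarith))) (n + 1) (transIdx n)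
    (fun m hm => mem_smoothNumbers_of_dvd (Nat.dvd_of_mem_divisors (mem_transIdx.1 hm).1))
  change ∑ m ∈ transIdx n, (√(m : ℝ))⁻¹ ≤ sqrtProd n at hE
  have hpow : (0 : ℝ) < 2 ^ n := by positivity
  set c : ℝ := √(2 * n / 2 ^ n) with hc
  have hc0 : 0 ≤ c := Real.sqrt_nonneg _
  have hc2 : c ^ 2 = 2 * n / 2 ^ n := Real.sq_sqrt (by positivity)
  have hterm : ∀ m ∈ transIdx n, (1 : ℝ) / m ≤ c * (√(m : ℝ))⁻¹ := by
    intro m hm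
    have hm0 : 0 < m := Nat.pos_of_mem_divisors (mem_transIdx.1 hm).1
    have hmr : (0 : ℝ) < m := by exact_mod_cast hm0
    have h : (2 : ℝ) ^ n ≤ 2 * n * m := by exact_mod_cast two_pow_le_of_mem_transIdx hn hm
    have hcm : (√(m : ℝ))⁻¹ ≤ c := by
      rw [← Real.sqrt_inv]
      refine Real.sqrt_le_sqrt ?_
      rw [inv_eq_one_div, div_le_div_iff₀ hmr hpow, one_mul]
      exact h
    calc (1 : ℝ) / m = (√(m : ℝ))⁻¹ * (√(m : ℝ))⁻¹ := by
          rw [← mul_inv, Real.mul_self_sqrt hmr.le, one_div]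
      _ ≤ _ := mul_le_mul_of_nonneg_right hcm (inv_nonneg.2 (Real.sqrt_nonneg _))
  refine ((Finset.sum_le_sum hterm).trans (Finset.mul_sum _ _ _).symm.le).trans_lt ?_
  refine (mul_le_mul_of_nonneg_left hE hc0).trans_lt ?_
  refine lt_of_pow_lt_pow_left₀ 2 (by norm_num) ?_
  rw [mul_pow, hc2, div_mul_eq_mul_div, div_lt_iff₀ hpow]
  have := sqrtProd_sq_lt hn
  linarith

/-! ### The induction -/

lemma HSJ_lt_two_of_ge {n : ℕ} (hn : 14 ≤ n) : HSJ (Perm (Fin n)) < 2 := by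
  induction n using Nat.strong_induction_on with
  | _ n ih =>
  have h2 : ∀ k, 7 ≤ k → k < n → HSJ (Perm (Fin k)) ≤ 2 := by
    intro k h7 hk
    rcases le_or_gt 14 k with h | h
    · exact (ih k hk h).le
    · exact (HSJ_medium h7 (by omega)).trans (by norm_num)
  have h1 : ∀ k, 3 ≤ k → k < n → HSJ (Perm (Fin k)) ≤ 5 / 2 := by
    intro k h3 hk
    rcases le_or_gt 7 k with h | h
    · exact (h2 k h hk).trans (by norm_num)
    · by_cases h4 : k = 4
      · subst h4; exact HSJ_four_le
      · exact (HSJ_small h3 (by omega) h4).trans (by norm_num)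
  have hU := intransitive_sum_le hn h1 h2
  have hT : ∑ m ∈ transIdx n, (1 : ℝ) / m < 1 / 4 := by
    rcases le_or_gt n 22 with h | h
    · exact transIdx_sum_lt_of_le hn h
    · exact transIdx_sum_lt_of_ge h
  have hS := HSJ_le_split (n := n) (by omega)
  refine hS.trans_lt ((add_lt_add_of_le_of_lt (add_le_add_right hU (3 / 2)) hT).trans_le ?_)
  norm_num

/-- For `n ≥ 3`, `𝒥(S_n) ≤ 5/2` with equality iff `n = 4`, and `𝒥(S_n) < 2` for
`n ≥ 7`. -/
theorem HSJ_symmetric_group (n : ℕ) (hn : 3 ≤ n) :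
    HSJ (Equiv.Perm (Fin n)) ≤ 5 / 2 ∧
      (HSJ (Equiv.Perm (Fin n)) = 5 / 2 ↔ n = 4) ∧
      (7 ≤ n → HSJ (Equiv.Perm (Fin n)) < 2) := by
  have hlt : 7 ≤ n → HSJ (Perm (Fin n)) < 2 := by
    intro h7
    rcases le_or_gt n 13 with h | h
    · exact (HSJ_medium h7 h).trans_lt (by norm_num)
    · exact HSJ_lt_two_of_ge h
  by_cases h4 : n = 4
  · subst h4
    have h := le_antisymm HSJ_four_le le_HSJ_four
    exact ⟨HSJ_four_le, ⟨fun _ => rfl, fun _ => h⟩, hlt⟩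
  · have h : HSJ (Perm (Fin n)) < 5 / 2 := by
      rcases le_or_gt 7 n with h7 | h7
      · exact (hlt h7).trans (by norm_num)
      · exact (HSJ_small hn (by omega) h4).trans_lt (by norm_num)
    exact ⟨h.le, ⟨fun h' => absurd h' h.ne, fun h' => absurd h' h4⟩, hlt⟩
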